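/- arXiv:1510.05765 — 9 statements merged into one kernel-verified Lean document; each statement's English description precedes it below -/
import Mathlib

section
/- The number of Γ-free 0-1 matrices of size n×k equals the poly-Bernoulli number B(n,k); that is, the cardinality of the set of matrices M : Fin n → Fin k → Bool containing no Γ configuration is ∑_{m=0}^{min(n,k)} (m!)² · S(n+1,m+1) · S(k+1,m+1). -/
/-!
The proof shows that both sides satisfy the recurrence
`a (n + 1) k = ∑ r ≤ k, C(k, r) * a n (k - (r - 1))` (truncated subtraction) with `a 0 k = 1`.

*Matrices.* Let `t` be the set of columns where the first row of `M` has a one. A Γ using the first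
row has its corner at an element of `t` other than the largest, so `M` is Γ-free iff the remaining
rows form a Γ-free matrix vanishing in all columns of `t` except the largest. Deleting these
`#t - 1` columns leaves an arbitrary Γ-free matrix with `n` rows and `k - (#t - 1)` columns
(`card_gammaFree_succ`).

*Numbers.* Write the sum as `∑ m, (m! S(n+1,m+1)) f_m(k)` with `f_m(k) = m! S(k+1,m+1)`. The
recurrence for `S(n+2,m+1)` moves the step in `n` onto `f_m`, so that it suffices to evaluate
`∑ r, C(k, r) f_m(k - (r - 1)) = (m + 1) (f_m(k) + f_{m+1}(k))`
(`sum_choose_mul_stirling_shift`); this follows from `∑ i ≤ k, C(k, i) S(i, m) = S(k+1, m+1)`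
(`binomTransform_stirling`).
-/

/-- Stirling numbers of the second kind: `stirling a b` is the number of
partitions of an `a`-element set into `b` nonempty blocks. -/
def stirling : ℕ → ℕ → ℕ
  | 0, 0 => 1
  | 0, _ + 1 => 0
  | _ + 1, 0 => 0
  | n + 1, b + 1 => (b + 1) * stirling n (b + 1) + stirling n b

/-- The poly-Bernoulli number `B(n,k) = ∑_{m=0}^{min(n,k)} (m!)² S(n+1,m+1) S(k+1,m+1)`. -/
def polyBernoulli (n k : ℕ) : ℕ :=
  ∑ m ∈ Finset.range (min n k + 1),
    (Nat.factorial m) ^ 2 * stirling (n + 1) (m + 1) * stirling (k + 1) (m + 1)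

/-- A 0-1 matrix `M` contains a Γ configuration iff there are rows `i < i'` and
columns `j < j'` with `M i j = true`, `M i j' = true` and `M i' j = true`.
`M` is Γ-free iff it contains no Γ configuration. -/
def GammaFree {n k : ℕ} (M : Fin n → Fin k → Bool) : Prop :=
  ¬ ∃ (i i' : Fin n) (j j' : Fin k),
      i < i' ∧ j < j' ∧ M i j = true ∧ M i j' = true ∧ M i' j = true

/-! ### Stirling numbers and the recurrence for poly-Bernoulli numbers -/

theorem stirling_succ_succ (a b : ℕ) :
    stirling (a + 1) (b + 1) = (b + 1) * stirling a (b + 1) + stirling a b := by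
  rw [stirling]

theorem stirling_succ_zero (a : ℕ) : stirling (a + 1) 0 = 0 := by
  rw [stirling]

theorem stirling_eq_zero_of_lt : ∀ {a b : ℕ}, a < b → stirling a b = 0
  | 0, 0, h => absurd h (by omega)
  | 0, _ + 1, _ => by rw [stirling]
  | _ + 1, 0, h => absurd h (by omega)
  | a + 1, b + 1, h => by
    rw [stirling_succ_succ, stirling_eq_zero_of_lt (show a < b + 1 by omega),
      stirling_eq_zero_of_lt (show a < b by omega), mul_zero, add_zero]

theorem stirling_succ_one (a : ℕ) : stirling (a + 1) 1 = 1 := by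
  induction a with
  | zero => rfl
  | succ a ih => rw [stirling_succ_succ, ih, stirling_succ_zero]

/-- The binomial transform `∑ i ≤ k, C(k, i) f(i)` of a sequence `f`. -/
def binomTransform (f : ℕ → ℕ) (k : ℕ) : ℕ :=
  ∑ i ∈ Finset.range (k + 1), k.choose i * f i

/-- Pascal's rule for the binomial transform. -/
theorem binomTransform_succ (f : ℕ → ℕ) (k : ℕ) :
    binomTransform f (k + 1) = binomTransform f k + binomTransform (fun i => f (i + 1)) k := by
  unfold binomTransform
  rw [Finset.sum_range_succ']
  simp only [Nat.choose_succ_succ, add_mul, Finset.sum_add_distrib, Nat.choose_zero_right]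
  rw [Finset.sum_range_succ (fun i => k.choose (i + 1) * f (i + 1)),
    Finset.sum_range_succ' (fun i => k.choose i * f i)]
  simp
  ring

theorem binomTransform_add (f g : ℕ → ℕ) (k : ℕ) :
    binomTransform (fun i => f i + g i) k = binomTransform f k + binomTransform g k := by
  simp only [binomTransform, mul_add, Finset.sum_add_distrib]

theorem binomTransform_const_mul (c : ℕ) (f : ℕ → ℕ) (k : ℕ) :
    binomTransform (fun i => c * f i) k = c * binomTransform f k := by
  simp only [binomTransform, Finset.mul_sum]
  exact Finset.sum_congr rfl fun i _ => by ring

/-- A partition of `k + 1` elements into `m + 1` blocks is given by the complement of the block of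
the last element and a partition of that complement into `m` blocks. -/
theorem binomTransform_stirling (k m : ℕ) :
    binomTransform (fun i => stirling i m) k = stirling (k + 1) (m + 1) := by
  induction k generalizing m with
  | zero =>
    rw [stirling_succ_succ, stirling_eq_zero_of_lt (show 0 < m + 1 by omega)]
    simp [binomTransform]
  | succ k ih =>
    rw [binomTransform_succ, ih]
    cases m with
    | zero =>
      simp [binomTransform, stirling_succ_zero, stirling_succ_one]
    | succ m =>
      simp only [stirling_succ_succ _ m]
      rw [binomTransform_add, binomTransform_const_mul, ih, ih,
        stirling_succ_succ (k + 1) (m + 1)]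
      ring

/-- The twice shifted version of `binomTransform_stirling`. -/
theorem binomTransform_stirling_add_two (k m : ℕ) :
    binomTransform (fun i => stirling (i + 2) (m + 1)) k =
      (m + 1) ^ 2 * stirling (k + 1) (m + 2) + m * stirling (k + 1) (m + 1)
        + stirling (k + 2) (m + 1) := by
  have h1 : ∀ m, binomTransform (fun i => stirling (i + 1) (m + 1)) k =
      (m + 1) * stirling (k + 1) (m + 2) + stirling (k + 1) (m + 1) := fun m => by
    have e : (fun i => stirling (i + 1) (m + 1)) =
        fun i => (m + 1) * stirling i (m + 1) + stirling i m :=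
      funext fun i => stirling_succ_succ i m
    rw [e, binomTransform_add, binomTransform_const_mul, binomTransform_stirling,
      binomTransform_stirling]
  have e : (fun i => stirling (i + 2) (m + 1)) =
      fun i => (m + 1) * stirling (i + 1) (m + 1) + stirling (i + 1) m :=
    funext fun i => stirling_succ_succ (i + 1) m
  rw [e, binomTransform_add, binomTransform_const_mul, h1]
  cases m with
  | zero => simp [binomTransform, stirling_succ_zero, stirling_succ_one]
  | succ m =>
    rw [h1, stirling_succ_succ (k + 1) (m + 1)]
    ring

/-- The operator of the recurrence, applied to a column of Stirling numbers. -/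
theorem sum_choose_mul_stirling_shift (k m : ℕ) :
    ∑ r ∈ Finset.range (k + 1), k.choose r * stirling (k - (r - 1) + 1) (m + 1) =
      (m + 1) * stirling (k + 1) (m + 1) + (m + 1) ^ 2 * stirling (k + 1) (m + 2) := by
  have h := binomTransform_stirling_add_two k m
  rw [binomTransform, ← Finset.sum_range_reflect, Finset.sum_range_succ'] at h
  rw [Finset.sum_range_succ']
  -- Apart from `r = 0`, the substitution `i = k - r` turns the sum into a binomial transform.
  have e : ∑ r ∈ Finset.range k,
        k.choose (r + 1) * stirling (k - (r + 1 - 1) + 1) (m + 1) =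
      ∑ r ∈ Finset.range k, k.choose (k + 1 - 1 - (r + 1)) *
        stirling (k + 1 - 1 - (r + 1) + 2) (m + 1) := by
    refine Finset.sum_congr rfl fun r hr => ?_
    have hr := Finset.mem_range.1 hr
    rw [show k + 1 - 1 - (r + 1) = k - (r + 1) by omega, Nat.choose_symm (by omega),
      show k - (r + 1) + 2 = k - (r + 1 - 1) + 1 by omega]
  rw [e]
  simp at h ⊢
  linarith

/-- The upper summation bound is immaterial once it exceeds `n`. -/
theorem polyBernoulli_eq_sum {n N : ℕ} (h : n < N) (k : ℕ) :
    polyBernoulli n k = ∑ m ∈ Finset.range N,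
      m.factorial ^ 2 * stirling (n + 1) (m + 1) * stirling (k + 1) (m + 1) := by
  refine Finset.sum_subset (fun m hm => ?_) fun m _ hm => ?_
  · simp only [Finset.mem_range] at hm ⊢
    omega
  · simp only [Finset.mem_range] at hm
    rcases le_total n k with hk | hk
    · rw [stirling_eq_zero_of_lt (show n + 1 < m + 1 by omega)]
      simp
    · rw [stirling_eq_zero_of_lt (show k + 1 < m + 1 by omega)]
      simp

theorem polyBernoulli_zero_left (k : ℕ) : polyBernoulli 0 k = 1 := by
  simp [polyBernoulli, stirling_succ_one]

theorem polyBernoulli_succ (n k : ℕ) :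
    polyBernoulli (n + 1) k =
      ∑ r ∈ Finset.range (k + 1), k.choose r * polyBernoulli n (k - (r - 1)) := by
  simp only [polyBernoulli_eq_sum (show n < n + 1 by omega), Finset.mul_sum]
  rw [polyBernoulli_eq_sum (show n + 1 < n + 2 by omega), Finset.sum_comm]
  -- Evaluate the right-hand side by the operator identity.
  have hR : ∀ m, ∑ r ∈ Finset.range (k + 1), k.choose r *
        (m.factorial ^ 2 * stirling (n + 1) (m + 1) * stirling (k - (r - 1) + 1) (m + 1)) =
      m.factorial ^ 2 * stirling (n + 1) (m + 1) * ((m + 1) * stirling (k + 1) (m + 1)) +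
      (m + 1).factorial ^ 2 * stirling (n + 1) (m + 1) * stirling (k + 1) (m + 2) := fun m => by
    have h := congrArg (m.factorial ^ 2 * stirling (n + 1) (m + 1) * ·)
      (sum_choose_mul_stirling_shift k m)
    simp only [Finset.mul_sum] at h
    calc _ = _ := Finset.sum_congr rfl fun r _ => by ring
      _ = _ := h
      _ = _ := by rw [Nat.factorial_succ]; ring
  have hL : ∀ m, m.factorial ^ 2 * stirling (n + 1 + 1) (m + 1) * stirling (k + 1) (m + 1) =
      m.factorial ^ 2 * stirling (n + 1) (m + 1) * ((m + 1) * stirling (k + 1) (m + 1)) +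
      m.factorial ^ 2 * stirling (n + 1) m * stirling (k + 1) (m + 1) := fun m => by
    rw [stirling_succ_succ (n + 1)]
    ring
  simp only [hR, hL, Finset.sum_add_distrib]
  congr 1
  · rw [Finset.sum_range_succ, stirling_eq_zero_of_lt (show n + 1 < n + 1 + 1 by omega)]
    simp
  · rw [Finset.sum_range_succ', stirling_succ_zero]
    simp

/-! ### The recurrence for Γ-free matrices -/

/-- The non-maximal elements of `t`. If `t` is the support of the first row of a matrix, these are
the columns in which a Γ configuration can have its corner in that row. -/
def corners {k : ℕ} (t : Finset (Fin k)) : Finset (Fin k) :=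
  {j ∈ t | ∃ j' ∈ t, j < j'}

theorem card_corners {k : ℕ} (t : Finset (Fin k)) : (corners t).card = t.card - 1 := by
  rcases t.eq_empty_or_nonempty with rfl | ht
  · simp [corners]
  · rw [← Finset.card_erase_of_mem (t.max'_mem ht)]
    congr 1
    ext j
    simp only [corners, Finset.mem_filter, Finset.mem_erase]
    constructor
    · rintro ⟨hj, j', hj', hlt⟩
      exact ⟨(hlt.trans_le (t.le_max' j' hj')).ne, hj⟩
    · rintro ⟨hne, hj⟩
      exact ⟨hj, t.max' ht, t.max'_mem ht, lt_of_le_of_ne (t.le_max' j hj) hne⟩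

/-- The support of row `r`. -/
def rowSupport {k : ℕ} (r : Fin k → Bool) : Finset (Fin k) := {j | r j = true}

theorem gammaFree_cons {n k : ℕ} (r : Fin k → Bool) (N : Fin n → Fin k → Bool) :
    GammaFree (Fin.cons r N : Fin (n + 1) → Fin k → Bool) ↔
      GammaFree N ∧ ∀ i, ∀ j ∈ corners (rowSupport r), N i j = false := by
  constructor
  · intro h
    refine ⟨?_, fun i j hj => ?_⟩
    · rintro ⟨i, i', j, j', hi, hj, h1, h2, h3⟩
      exact h ⟨i.succ, i'.succ, j, j', by simpa using hi, hj, by simpa using h1,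
        by simpa using h2, by simpa using h3⟩
    · simp only [corners, rowSupport, Finset.mem_filter, Finset.mem_univ, true_and] at hj
      obtain ⟨hj, j', hj', hlt⟩ := hj
      by_contra hN
      exact h ⟨0, i.succ, j, j', Fin.succ_pos i, hlt, by simpa using hj, by simpa using hj',
        by simpa using hN⟩
  · rintro ⟨hN, hc⟩ ⟨i, i', j, j', hi, hj, h1, h2, h3⟩
    cases i' using Fin.cases with
    | zero => simp at hi
    | succ i' =>
      cases i using Fin.cases with
      | zero =>
        have := hc i' j (by
          simp only [corners, rowSupport, Finset.mem_filter, Finset.mem_univ, true_and]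
          exact ⟨by simpa using h1, j', by simpa using h2, hj⟩)
        simp [this] at h3
      | succ i =>
        exact hN ⟨i, i', j, j', by simpa using hi, hj, by simpa using h1, by simpa using h2,
          by simpa using h3⟩

/-- Splitting a Γ-free matrix into the support of its first row and the remaining rows. -/
def gammaFreeSuccEquiv (n k : ℕ) :
    {M : Fin (n + 1) → Fin k → Bool // GammaFree M} ≃
      Σ t : Finset (Fin k), {N : Fin n → Fin k → Bool //
        GammaFree N ∧ ∀ i, ∀ j ∈ corners t, N i j = false} where
  toFun M := ⟨rowSupport (M.1 0), Fin.tail M.1,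
    (gammaFree_cons (M.1 0) (Fin.tail M.1)).1 (by rw [Fin.cons_self_tail]; exact M.2)⟩
  invFun p := ⟨Fin.cons (fun j => decide (j ∈ p.1)) p.2.1, by
    rw [gammaFree_cons]
    have : rowSupport (fun j => decide (j ∈ p.1)) = p.1 := by ext; simp [rowSupport]
    rw [this]
    exact p.2.2⟩
  left_inv M := by
    apply Subtype.ext
    have : (fun j => decide (j ∈ rowSupport (M.1 0))) = M.1 0 := by ext; simp [rowSupport]
    simp only [this, Fin.cons_self_tail]
  right_inv := by
    rintro ⟨t, N, hN⟩
    have ht : rowSupport (fun j => decide (j ∈ t)) = t := by ext; simp [rowSupport]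
    have key : ∀ (t' : Finset (Fin k)) (N' : Fin n → Fin k → Bool) (h' : GammaFree N' ∧
        ∀ i, ∀ j ∈ corners t', N' i j = false), t' = t → N' = N →
        (⟨t', N', h'⟩ : Σ t : Finset (Fin k), {N : Fin n → Fin k → Bool //
          GammaFree N ∧ ∀ i, ∀ j ∈ corners t, N i j = false}) = ⟨t, N, hN⟩ := by
      rintro t' N' h' rfl rfl
      rfl
    exact key _ _ _ ht (Fin.tail_cons _ _)

/-- Deleting a set `c` of zero columns. -/
theorem card_gammaFree_vanishing {n k l : ℕ} (c : Finset (Fin k)) (hc : cᶜ.card = l) :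
    Nat.card {N : Fin n → Fin k → Bool // GammaFree N ∧ ∀ i, ∀ j ∈ c, N i j = false} =
      Nat.card {N : Fin n → Fin l → Bool // GammaFree N} := by
  let e := cᶜ.orderEmbOfFin hc
  have he : ∀ j, j ∉ c ↔ ∃ a, e a = j := fun j => by
    rw [← Set.mem_range, cᶜ.range_orderEmbOfFin hc]
    simp
  have hext : ∀ (N : Fin n → Fin l → Bool) i j,
      Function.extend e (N i) (fun _ => false) j = true → ∃ a, e a = j := by
    intro N i j h
    by_contra hj
    rw [Function.extend_apply' _ _ _ hj] at h
    simp at h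
  -- The inverse of restriction along `e` reinserts the zero columns.
  refine Nat.card_congr
    { toFun := fun N => ⟨fun i a => N.1 i (e a), ?_⟩
      invFun := fun N => ⟨fun i => Function.extend e (N.1 i) (fun _ => false), ?_, ?_⟩
      left_inv := ?_
      right_inv := ?_ }
  · rintro ⟨i, i', j, j', hi, hj, h⟩
    exact N.2.1 ⟨i, i', e j, e j', hi, e.lt_iff_lt.2 hj, h⟩
  · rintro ⟨i, i', j, j', hi, hj, h1, h2, h3⟩
    obtain ⟨a, rfl⟩ := hext _ _ _ h1
    obtain ⟨b, rfl⟩ := hext _ _ _ h2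
    replace h1 := (e.injective.extend_apply _ _ a).symm.trans h1
    replace h3 := (e.injective.extend_apply _ _ a).symm.trans h3
    replace h2 := (e.injective.extend_apply _ _ b).symm.trans h2
    exact N.2 ⟨i, i', a, b, hi, e.lt_iff_lt.1 hj, h1, h2, h3⟩
  · intro i j hj
    exact Function.extend_apply' _ _ _ fun h => (he j).2 h hj
  · rintro ⟨N, hN, h0⟩
    apply Subtype.ext
    funext i j
    change Function.extend e (fun a => N i (e a)) (fun _ => false) j = N i j
    by_cases hj : ∃ a, e a = j
    · obtain ⟨a, rfl⟩ := hj
      exact e.injective.extend_apply _ _ _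
    · have hjc : j ∈ c := by
        by_contra h
        exact hj ((he j).1 h)
      rw [h0 i j hjc]
      exact Function.extend_apply' _ _ _ hj
  · rintro ⟨N, hN⟩
    apply Subtype.ext
    funext i a
    change Function.extend e (N i) (fun _ => false) (e a) = N i a
    exact e.injective.extend_apply _ _ _

theorem card_gammaFree_succ (n k : ℕ) :
    Nat.card {M : Fin (n + 1) → Fin k → Bool // GammaFree M} =
      ∑ r ∈ Finset.range (k + 1), k.choose r *
        Nat.card {N : Fin n → Fin (k - (r - 1)) → Bool // GammaFree N} := by
  rw [Nat.card_congr (gammaFreeSuccEquiv n k), Nat.card_sigma]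
  have h : ∀ t : Finset (Fin k), Nat.card {N : Fin n → Fin k → Bool //
        GammaFree N ∧ ∀ i, ∀ j ∈ corners t, N i j = false} =
      Nat.card {N : Fin n → Fin (k - (t.card - 1)) → Bool // GammaFree N} := fun t =>
    card_gammaFree_vanishing _ (by rw [Finset.card_compl, card_corners, Fintype.card_fin])
  simp only [h]
  rw [← Finset.powerset_univ, Finset.sum_powerset_apply_card
    (fun r => Nat.card {N : Fin n → Fin (k - (r - 1)) → Bool // GammaFree N})]
  simp

/-- The number of Γ-free 0-1 matrices of size n×k equals the poly-Bernoulli number B(n,k). -/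
theorem card_gammaFree_eq_polyBernoulli (n k : ℕ) :
    Nat.card {M : Fin n → Fin k → Bool // GammaFree M} = polyBernoulli n k := by
  induction n generalizing k with
  | zero =>
    rw [polyBernoulli_zero_left, Nat.card_eq_one_iff_unique]
    exact ⟨inferInstance, ⟨⟨Fin.elim0, fun ⟨i, _⟩ => i.elim0⟩⟩⟩
  | succ n ih =>
    rw [card_gammaFree_succ, polyBernoulli_succ]
    simp only [ih]
end

section
/- The number of lonesum 0-1 matrices of size n×k equals the poly-Bernoulli number B(n,k); that is, the cardinality of the set of lonesum matrices M : Fin n → Fin k → Bool is ∑_{m=0}^{min(n,k)} (m!)² · S(n+1,m+1) · S(k+1,m+1). -/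
/-- The row sum of row `i`: the number of columns `j` with `M i j = true`. -/
def rowSum {n k : ℕ} (M : Fin n → Fin k → Bool) (i : Fin n) : ℕ :=
  (Finset.univ.filter fun j : Fin k => M i j = true).card

/-- The column sum of column `j`: the number of rows `i` with `M i j = true`. -/
def colSum {n k : ℕ} (M : Fin n → Fin k → Bool) (j : Fin k) : ℕ :=
  (Finset.univ.filter fun i : Fin n => M i j = true).card

/-- A 0-1 matrix is lonesum iff it is uniquely determined by its row and column sums. -/
def Lonesum {n k : ℕ} (M : Fin n → Fin k → Bool) : Prop :=
  ∀ N : Fin n → Fin k → Bool,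
    (∀ i, rowSum N i = rowSum M i) → (∀ j, colSum N j = colSum M j) → N = M

/-! ### Counting maps covering a given set -/

/-- The number of maps from an `n`-element set to a set with `d + s` elements whose range contains
`s` prescribed elements, defined through the recursion on `n` that conditions on one value. -/
def coverCount : ℕ → ℕ → ℕ → ℕ
  | 0, _, s => if s = 0 then 1 else 0
  | n + 1, d, s => d * coverCount n d s + s * coverCount n (d + 1) (s - 1)

/-- The maps on `d + 1 + s` points covering `s` of them, split according to whether they hit one
further prescribed point. -/
lemma coverCount_split (n d s : ℕ) :
    coverCount n (d + 1) s = coverCount n d (s + 1) + coverCount n d s := by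
  induction n generalizing d s with
  | zero => simp [coverCount]
  | succ n ih =>
    simp only [coverCount, Nat.add_sub_cancel]
    cases s with
    | zero =>
      simp only [ih d 0]
      ring
    | succ s =>
      simp only [Nat.add_sub_cancel]
      rw [ih (d + 1) s, ih d (s + 1)]
      ring

lemma coverCount_one (n m : ℕ) :
    coverCount n 1 m = Nat.factorial m * stirling (n + 1) (m + 1) := by
  induction n generalizing m with
  | zero =>
    cases m with
    | zero => simp [coverCount, stirling]
    | succ m => simp [coverCount, stirling]
  | succ n ih =>
    rw [coverCount, stirling]
    cases m with
    | zero =>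
      rw [ih]
      simp [stirling]
    | succ m =>
      simp only [Nat.add_sub_cancel]
      rw [coverCount_split n 1 m, ih, ih, Nat.factorial_succ]
      ring

/-- The maps `Fin n → α` whose range contains `S`. -/
abbrev Covering (n : ℕ) {α : Type} (S : Finset α) : Type :=
  {f : Fin n → α // ∀ v ∈ S, ∃ i, f i = v}

/-- A map covers `S` iff its tail covers `S` with the first value removed. -/
def coveringSuccEquiv (n : ℕ) {α : Type} [DecidableEq α] (S : Finset α) :
    Covering (n + 1) S ≃ Σ v : α, Covering n (S.erase v) where
  toFun f := ⟨f.1 0, fun i => f.1 i.succ, by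
    intro v hv
    obtain ⟨hv0, hvS⟩ := Finset.mem_erase.1 hv
    obtain ⟨i, hi⟩ := f.2 v hvS
    cases i using Fin.cases with
    | zero => exact absurd hi.symm hv0
    | succ i => exact ⟨i, hi⟩⟩
  invFun p := ⟨Fin.cons p.1 p.2.1, by
    intro v hv
    by_cases h : v = p.1
    · exact ⟨0, h.symm⟩
    · obtain ⟨i, hi⟩ := p.2.2 v (Finset.mem_erase.2 ⟨h, hv⟩)
      exact ⟨i.succ, hi⟩⟩
  left_inv f := Subtype.ext (Fin.cons_self_tail f.1)
  right_inv p := rfl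

lemma card_covering (n : ℕ) {α : Type} [Fintype α] [DecidableEq α] (S : Finset α) :
    Nat.card (Covering n S) = coverCount n (Sᶜ.card) S.card := by
  induction n generalizing S with
  | zero =>
    rw [coverCount]
    split_ifs with h
    · rw [Finset.card_eq_zero] at h
      subst h
      rw [Nat.card_eq_one_iff_unique]
      exact ⟨inferInstance, ⟨⟨Fin.elim0, by simp⟩⟩⟩
    · obtain ⟨v, hv⟩ := Finset.card_ne_zero.1 h
      have : IsEmpty (Covering 0 S) := ⟨fun f => by
        obtain ⟨i, -⟩ := f.2 v hv
        exact i.elim0⟩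
      simp
  | succ n ih =>
    rw [Nat.card_congr (coveringSuccEquiv n S), Nat.card_sigma, coverCount,
      ← Finset.sum_compl_add_sum S]
    congr 1
    · rw [← smul_eq_mul]
      refine Finset.sum_eq_card_nsmul fun v hv => ?_
      rw [Finset.erase_eq_of_notMem (Finset.mem_compl.1 hv), ih]
    · rw [← smul_eq_mul]
      refine Finset.sum_eq_card_nsmul fun v hv => ?_
      rw [ih, Finset.card_erase_of_mem hv, Finset.compl_erase,
        Finset.card_insert_of_notMem (by simpa using hv)]

lemma card_covering_nonzero (n m : ℕ) :
    Nat.card (Covering n ({0}ᶜ : Finset (Fin (m + 1)))) =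
      Nat.factorial m * stirling (n + 1) (m + 1) := by
  rw [card_covering, ← coverCount_one]
  simp [Finset.card_compl]

/-! ### Threshold representations -/

/-- `M` has no two rows and two columns on which it restricts to a permutation matrix. -/
def SwitchFree {n k : ℕ} (M : Fin n → Fin k → Bool) : Prop :=
  ∀ i i' j j', M i j = true → M i' j' = true → M i j' = true ∨ M i' j = true

/-- `M` is the threshold matrix of labels `f` (rows) and `g` (columns) in `{0, …, m}`: the entry
at `(i, j)` is `1` iff `f i + g j` exceeds `m`. -/
structure ThresholdRep {n k : ℕ} (M : Fin n → Fin k → Bool) (m : ℕ) (f : Fin n → ℕ)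
    (g : Fin k → ℕ) : Prop where
  left_le : ∀ i, f i ≤ m
  right_le : ∀ j, g j ≤ m
  iff : ∀ i j, M i j = true ↔ m < f i + g j

/-- `f` attains every value in `{1, …, m}`. -/
def Hits {n : ℕ} (m : ℕ) (f : Fin n → ℕ) : Prop :=
  ∀ v, 1 ≤ v → v ≤ m → ∃ i, f i = v

lemma ThresholdRep.transpose {n k : ℕ} {M : Fin n → Fin k → Bool} {m : ℕ} {f : Fin n → ℕ}
    {g : Fin k → ℕ} (h : ThresholdRep M m f g) : ThresholdRep (fun j i => M i j) m g f :=
  ⟨h.right_le, h.left_le, fun j i => by rw [h.iff, add_comm]⟩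

lemma rowSum_le {n k : ℕ} (M : Fin n → Fin k → Bool) (i : Fin n) : rowSum M i ≤ k := by
  simpa [rowSum] using Finset.card_filter_le (Finset.univ : Finset (Fin k)) (fun j => M i j = true)

lemma SwitchFree.rowSum_lt {n k : ℕ} {M : Fin n → Fin k → Bool} (h : SwitchFree M) {i i' : Fin n}
    {j : Fin k} (hi : ¬ M i j = true) (hi' : M i' j = true) : rowSum M i < rowSum M i' := by
  refine Finset.card_lt_card (Finset.ssubset_iff_of_subset ?_ |>.2 ⟨j, by simpa, by simpa using hi⟩)
  intro j' hj'
  simp only [Finset.mem_filter, Finset.mem_univ, true_and] at hj' ⊢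
  exact (h i i' j' j hj' hi').resolve_left hi

lemma exists_rep_of_switchFree {n k : ℕ} {M : Fin n → Fin k → Bool} (h : SwitchFree M) :
    ∃ m f g, ThresholdRep M m f g := by
  have key : ∀ j, ∃ t ≤ k, ∀ i, M i j = true ↔ k < rowSum M i + t := by
    intro j
    by_cases hj : ∃ i, M i j = true
    · -- The threshold of column `j` is the least sum of a row with a `1` in that column.
      obtain ⟨i₀, hi₀, hmin⟩ := Finset.exists_min_image
        (Finset.univ.filter fun i => M i j = true) (rowSum M) (by
          obtain ⟨i, hi⟩ := hj
          exact ⟨i, by simpa using hi⟩)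
      simp only [Finset.mem_filter, Finset.mem_univ, true_and] at hi₀ hmin
      have hpos : 0 < rowSum M i₀ := Finset.card_pos.2 ⟨j, by simpa using hi₀⟩
      have hle := rowSum_le M i₀
      refine ⟨k + 1 - rowSum M i₀, by omega, fun i => ⟨fun hi => ?_, fun hi => ?_⟩⟩
      · have := hmin i hi
        omega
      · by_contra hc
        have := h.rowSum_lt hc hi₀
        omega
    · refine ⟨0, Nat.zero_le _, fun i => ⟨fun hi => absurd ⟨i, hi⟩ hj, fun hi => ?_⟩⟩
      have := rowSum_le M i
      omega
  choose g hg hM using key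
  exact ⟨k, rowSum M, g, rowSum_le M, hg, fun i j => hM j i⟩

/-- A value `v` missed by `f` can be contracted, lowering `m` by one. -/
lemma ThresholdRep.contract {n k : ℕ} {M : Fin n → Fin k → Bool} {m : ℕ} {f : Fin n → ℕ}
    {g : Fin k → ℕ} (h : ThresholdRep M m f g) {v : ℕ} (hv1 : 1 ≤ v) (hvm : v ≤ m)
    (hv : ∀ i, f i ≠ v) :
    ∃ f' g', ThresholdRep M (m - 1) f' g' := by
  refine ⟨fun i => if v < f i then f i - 1 else f i,
    fun j => if v < m + 1 - g j then g j else g j - 1, fun i => ?_, fun j => ?_, fun i j => ?_⟩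
  · have := h.left_le i
    have := hv i
    split_ifs <;> omega
  · have := h.right_le j
    split_ifs <;> omega
  · have := h.left_le i
    have := h.right_le j
    have := hv i
    rw [h.iff]
    split_ifs <;> omega

lemma exists_rep_hits {n k : ℕ} {M : Fin n → Fin k → Bool} (h : ∃ m f g, ThresholdRep M m f g) :
    ∃ m f g, ThresholdRep M m f g ∧ Hits m f ∧ Hits m g := by
  classical
  obtain ⟨f, g, hr⟩ := Nat.find_spec h
  refine ⟨Nat.find h, f, g, hr, fun v h1 hm => ?_, fun v h1 hm => ?_⟩
  · by_contra! hc
    exact Nat.find_min h (by omega) (hr.contract h1 hm hc)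
  · by_contra! hc
    obtain ⟨g', f', hr'⟩ := hr.transpose.contract h1 hm hc
    exact Nat.find_min h (by omega) ⟨f', g', hr'.transpose⟩

/-- The strict order of the row labels is read off from the matrix. -/
lemma ThresholdRep.lt_iff {n k : ℕ} {M : Fin n → Fin k → Bool} {m : ℕ} {f : Fin n → ℕ}
    {g : Fin k → ℕ} (h : ThresholdRep M m f g) (hg : Hits m g) (i i' : Fin n) :
    f i < f i' ↔ ∃ j, M i' j = true ∧ ¬ M i j = true := by
  simp only [h.iff]
  constructor
  · intro hlt
    have := h.left_le i'
    obtain ⟨j, hj⟩ := hg (m + 1 - f i') (by omega) (by omega)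
    exact ⟨j, by omega, by omega⟩
  · rintro ⟨j, h1, h2⟩
    omega

lemma ThresholdRep.pos_iff {n k : ℕ} {M : Fin n → Fin k → Bool} {m : ℕ} {f : Fin n → ℕ}
    {g : Fin k → ℕ} (h : ThresholdRep M m f g) (hg : Hits m g) (i : Fin n) :
    0 < f i ↔ ∃ j, M i j = true := by
  simp only [h.iff]
  constructor
  · intro hlt
    have := h.left_le i
    obtain ⟨j, hj⟩ := hg (m + 1 - f i) (by omega) (by omega)
    exact ⟨j, by omega⟩
  · rintro ⟨j, h1⟩
    have := h.right_le j
    omega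

lemma ThresholdRep.left_le_left {n k : ℕ} {M : Fin n → Fin k → Bool} {m m' : ℕ} {f f' : Fin n → ℕ}
    {g g' : Fin k → ℕ} (h : ThresholdRep M m f g) (h' : ThresholdRep M m' f' g')
    (hf : Hits m f) (hg : Hits m g)
    (hg' : Hits m' g') (i : Fin n) : f i ≤ f' i := by
  have key : ∀ v i, f i = v → v ≤ f' i := by
    intro v
    induction v with
    | zero => intros; omega
    | succ v ih =>
      intro i hi
      rcases Nat.eq_zero_or_pos v with rfl | hv
      · exact (h'.pos_iff hg' i).2 ((h.pos_iff hg i).1 (by omega))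
      · have := h.left_le i
        obtain ⟨i', hi'⟩ := hf v hv (by omega)
        have h1 := ih i' hi'
        have h2 := (h'.lt_iff hg' i' i).2 ((h.lt_iff hg i' i).1 (by omega))
        omega
  exact key _ i rfl

lemma ThresholdRep.left_eq {n k : ℕ} {M : Fin n → Fin k → Bool} {m m' : ℕ} {f f' : Fin n → ℕ}
    {g g' : Fin k → ℕ} (h : ThresholdRep M m f g) (h' : ThresholdRep M m' f' g')
    (hf : Hits m f) (hg : Hits m g)
    (hf' : Hits m' f') (hg' : Hits m' g') : f = f' :=
  funext fun i => le_antisymm (h.left_le_left h' hf hg hg' i) (h'.left_le_left h hf' hg' hg i)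

lemma Hits.le_of_bounded {n m m' : ℕ} {f : Fin n → ℕ} (hf : Hits m f) (hb : ∀ i, f i ≤ m') :
    m ≤ m' := by
  rcases Nat.eq_zero_or_pos m with rfl | hm
  · exact Nat.zero_le _
  · obtain ⟨i, hi⟩ := hf m hm le_rfl
    exact hi ▸ hb i

lemma Hits.le_card {n m : ℕ} {f : Fin n → ℕ} (hf : Hits m f) : m ≤ n := by
  have hsub : Finset.Icc 1 m ⊆ Finset.univ.image f := fun v hv => by
    obtain ⟨h1, h2⟩ := Finset.mem_Icc.1 hv
    obtain ⟨i, hi⟩ := hf v h1 h2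
    exact Finset.mem_image.2 ⟨i, Finset.mem_univ _, hi⟩
  have h1 := Finset.card_le_card hsub
  have h2 := Finset.card_image_le (s := (Finset.univ : Finset (Fin n))) (f := f)
  simp at h1 h2
  omega

/-! ### Lonesum matrices are the threshold matrices -/

/-- Exchanging the diagonals of a switch yields another matrix with the same sums. -/
lemma Lonesum.switchFree {n k : ℕ} {M : Fin n → Fin k → Bool} (h : Lonesum M) : SwitchFree M := by
  intro i i' j j' h1 h2
  by_contra! hc
  obtain ⟨h3, h4⟩ := hc
  have hi : i ≠ i' := by
    rintro rfl
    exact h4 h1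
  have hj : j ≠ j' := by
    rintro rfl
    exact h3 h1
  -- The switch is performed by permuting columns in rows `i`, `i'`, equivalently rows in columns
  -- `j`, `j'`.
  let N : Fin n → Fin k → Bool := fun a b =>
    if a = i ∨ a = i' then M a (Equiv.swap j j' b) else M a b
  have hN : ∀ a b, N a b = if b = j ∨ b = j' then M (Equiv.swap i i' a) b else M a b := by
    intro a b
    simp only [N, Equiv.swap_apply_def]
    grind
  have hNM : N = M := by
    refine h N (fun a => ?_) (fun b => ?_)
    · unfold rowSum
      by_cases ha : a = i ∨ a = i'
      · simp only [N, if_pos ha]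
        exact Finset.card_equiv (Equiv.swap j j') (by simp)
      · simp only [N, if_neg ha]
    · unfold colSum
      simp only [hN]
      by_cases hb : b = j ∨ b = j'
      · simp only [if_pos hb]
        exact Finset.card_equiv (Equiv.swap i i') (by simp)
      · simp only [if_neg hb]
  have h5 := congrFun (congrFun hNM i) j
  simp only [N, true_or, if_true, Equiv.swap_apply_left] at h5
  exact h3 (h5.trans h1)

lemma ThresholdRep.lonesum {n k : ℕ} {M : Fin n → Fin k → Bool} {m : ℕ} {f : Fin n → ℕ}
    {g : Fin k → ℕ} (h : ThresholdRep M m f g) : Lonesum M := by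
  intro N hrow hcol
  let D : Fin n → Fin k → ℤ := fun i j =>
    (if M i j = true then 1 else 0) - (if N i j = true then 1 else 0)
  have hDrow : ∀ i, ∑ j, D i j = 0 := fun i => by
    have := hrow i
    simp only [rowSum] at this
    simp [D, this]
  have hDcol : ∀ j, ∑ i, D i j = 0 := fun j => by
    have := hcol j
    simp only [colSum] at this
    simp [D, this]
  -- The weight is odd, so that it is nonzero, and it is positive exactly on the entries `1` of `M`.
  have hsum : ∑ i, ∑ j, D i j * ((2 * (f i : ℤ) - 2 * m - 1) + 2 * (g j : ℤ)) = 0 := by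
    simp only [mul_add, Finset.sum_add_distrib, ← Finset.sum_mul]
    rw [Finset.sum_comm (f := fun i j => D i j * (2 * (g j : ℤ)))]
    simp only [← Finset.sum_mul, hDrow, hDcol]
    simp
  have hnn : ∀ i j, 0 ≤ D i j * ((2 * (f i : ℤ) - 2 * m - 1) + 2 * (g j : ℤ)) ∧
      (D i j * ((2 * (f i : ℤ) - 2 * m - 1) + 2 * (g j : ℤ)) = 0 → N i j = M i j) := by
    intro i j
    have := h.iff i j
    cases hM : M i j <;> cases hN : N i j <;> simp [D, hM, hN] at this ⊢ <;> omega
  rw [Finset.sum_eq_zero_iff_of_nonneg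
    (fun i _ => Finset.sum_nonneg fun j _ => (hnn i j).1)] at hsum
  funext i j
  have h1 := hsum i (Finset.mem_univ i)
  rw [Finset.sum_eq_zero_iff_of_nonneg (fun j _ => (hnn i j).1)] at h1
  exact (hnn i j).2 (h1 j (Finset.mem_univ j))

/-! ### The bijection -/

/-- The threshold matrix of row labels `f` and column labels `g`. -/
def thresholdMatrix {n k : ℕ} (m : ℕ) (f : Fin n → ℕ) (g : Fin k → ℕ) : Fin n → Fin k → Bool :=
  fun i j => decide (m < f i + g j)

lemma Covering.rep {n k m : ℕ} (f : Covering n ({0}ᶜ : Finset (Fin (m + 1))))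
    (g : Covering k ({0}ᶜ : Finset (Fin (m + 1)))) :
    ThresholdRep (thresholdMatrix m (fun i => (f.1 i : ℕ)) (fun j => (g.1 j : ℕ))) m
      (fun i => (f.1 i : ℕ)) (fun j => (g.1 j : ℕ)) :=
  ⟨fun i => Nat.le_of_lt_succ (f.1 i).2, fun j => Nat.le_of_lt_succ (g.1 j).2,
    fun i j => by simp [thresholdMatrix]⟩

lemma Covering.hits {n m : ℕ} (f : Covering n ({0}ᶜ : Finset (Fin (m + 1)))) :
    Hits m (fun i => (f.1 i : ℕ)) := by
  intro v h1 hm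
  obtain ⟨i, hi⟩ := f.2 ⟨v, by omega⟩ (by
    simp only [Finset.mem_compl, Finset.mem_singleton, Fin.ext_iff, Fin.val_zero]
    omega)
  exact ⟨i, by simp [hi]⟩

lemma exists_covering {n m : ℕ} {f : Fin n → ℕ} (hb : ∀ i, f i ≤ m) (hf : Hits m f) :
    ∃ F : Covering n ({0}ᶜ : Finset (Fin (m + 1))), (fun i => (F.1 i : ℕ)) = f := by
  refine ⟨⟨fun i => ⟨f i, Nat.lt_succ_of_le (hb i)⟩, fun v hv => ?_⟩, rfl⟩
  simp only [Finset.mem_compl, Finset.mem_singleton, Fin.ext_iff, Fin.val_zero] at hv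
  obtain ⟨i, hi⟩ := hf v (by omega) (Nat.le_of_lt_succ v.2)
  exact ⟨i, Fin.ext hi⟩

/-- Sends a normalized pair of labellings to its threshold matrix. -/
def toLonesum (n k : ℕ)
    (p : Σ m : Fin (min n k + 1), Covering n ({0}ᶜ : Finset (Fin (m.1 + 1))) ×
      Covering k ({0}ᶜ : Finset (Fin (m.1 + 1)))) :
    {M : Fin n → Fin k → Bool // Lonesum M} :=
  ⟨_, (Covering.rep p.2.1 p.2.2).lonesum⟩

lemma toLonesum_bijective (n k : ℕ) : Function.Bijective (toLonesum n k) := by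
  constructor
  · rintro ⟨⟨m, hm⟩, f, g⟩ ⟨⟨m', hm'⟩, f', g'⟩ heq
    have hM := congrArg Subtype.val heq
    simp only [toLonesum] at hM
    have h := Covering.rep f g
    have h' := Covering.rep f' g'
    rw [← hM] at h'
    have hf := h.left_eq h' f.hits g.hits f'.hits g'.hits
    have hg := h.transpose.left_eq h'.transpose g.hits f.hits g'.hits f'.hits
    have hmm : m = m' := le_antisymm
      (f.hits.le_of_bounded fun i => (congrFun hf i).trans_le (h'.left_le i))
      (f'.hits.le_of_bounded fun i => (congrFun hf i).symm.trans_le (h.left_le i))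
    subst hmm
    have hf' : f = f' := Subtype.ext (funext fun i => Fin.ext (congrFun hf i))
    have hg' : g = g' := Subtype.ext (funext fun j => Fin.ext (congrFun hg j))
    rw [hf', hg']
  · rintro ⟨M, hM⟩
    obtain ⟨m, f, g, hr, hf, hg⟩ := exists_rep_hits (exists_rep_of_switchFree hM.switchFree)
    obtain ⟨F, hF⟩ := exists_covering hr.left_le hf
    obtain ⟨G, hG⟩ := exists_covering hr.right_le hg
    refine ⟨⟨⟨m, Nat.lt_succ_of_le (le_min hf.le_card hg.le_card)⟩, F, G⟩, Subtype.ext ?_⟩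
    funext i j
    have h1 := (Covering.rep F G).iff i j
    rw [Bool.eq_iff_iff]
    refine h1.trans ?_
    rw [hr.iff, ← hF, ← hG]

/-- The number of lonesum 0-1 matrices of size n×k equals the poly-Bernoulli number B(n,k). -/
theorem card_lonesum_eq_polyBernoulli (n k : ℕ) :
    Nat.card {M : Fin n → Fin k → Bool // Lonesum M} = polyBernoulli n k := by
  rw [← Nat.card_congr (Equiv.ofBijective _ (toLonesum_bijective n k)), Nat.card_sigma,
    polyBernoulli, Finset.sum_range]
  refine Finset.sum_congr rfl fun m _ => ?_
  rw [Nat.card_prod, card_covering_nonzero, card_covering_nonzero]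
  ring
end

section
/- A 0-1 matrix M of size n×k is lonesum if and only if M contains neither of the 2×2 permutation matrices as a submatrix; that is, M is lonesum iff there do not exist rows i < i' and columns j < j' such that (M i j, M i j', M i' j, M i' j') equals (true, false, false, true) or equals (false, true, true, false). -/
/-- Two distinct indicator functions with equally many ones: the first has a one where the other
has a zero, since otherwise its support would be contained in the other, of the same size. -/
lemma exists_true_false_of_ne {α : Type*} [Fintype α] (f g : α → Bool)
    (h : (Finset.univ.filter fun a => g a = true).card =
      (Finset.univ.filter fun a => f a = true).card) (hne : g ≠ f) :
    ∃ a, f a = true ∧ g a = false := by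
  by_contra! hc
  have hsub : (Finset.univ.filter fun a => f a = true) ⊆
      Finset.univ.filter fun a => g a = true := by
    intro a ha
    simpa using hc a (by simpa using ha)
  have heq := Finset.eq_of_subset_of_card_le hsub h.le
  refine hne (funext fun a => ?_)
  have ha := Finset.ext_iff.mp heq a
  simp only [Finset.mem_filter, Finset.mem_univ, true_and] at ha
  exact (Bool.eq_iff_iff.mpr ha).symm

/-- The rows and columns are not ordered, so both permutation patterns are covered by listing the
rows in either order; the entries force the rows, and the columns, to be distinct. -/
lemma not_lonesum_of_pattern {n k : ℕ} (M : Fin n → Fin k → Bool) {i i' : Fin n} {j j' : Fin k}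
    (h1 : M i j = true) (h2 : M i j' = false)
    (h3 : M i' j = false) (h4 : M i' j' = true) : ¬ Lonesum M := by
  intro hM
  let N : Fin n → Fin k → Bool := fun a b =>
    if a = i ∨ a = i' then M a (Equiv.swap j j' b) else M a b
  -- On the pattern, interchanging the columns has the same effect as interchanging the rows.
  have hN : ∀ a b, N a b = if b = j ∨ b = j' then M (Equiv.swap i i' a) b else M a b := by
    intro a b
    simp only [N, Equiv.swap_apply_def]
    grind
  have hNM : N = M := by
    refine hM N (fun a => ?_) (fun b => ?_)
    · unfold rowSum
      by_cases ha : a = i ∨ a = i'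
      · exact Finset.card_equiv (Equiv.swap j j') (by simp [N, ha])
      · simp [N, ha]
    · unfold colSum
      by_cases hb : b = j ∨ b = j'
      · exact Finset.card_equiv (Equiv.swap i i') (by simp [hN, hb])
      · simp [hN, hb]
  have hij := congrFun (congrFun hNM i) j
  simp [N, h1, h2] at hij

/-- The hypothesis, for unordered rows and columns, says that the rows, as sets of columns, are
pairwise comparable under inclusion. -/
lemma lonesum_of_no_pattern {n k : ℕ} (M : Fin n → Fin k → Bool)
    (h : ∀ i i' j j', M i j = true → M i j' = false → M i' j = false → M i' j' = true → False) :
    Lonesum M := by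
  intro N hr hc
  by_contra hne
  obtain ⟨i₀, hi₀⟩ := Function.ne_iff.mp hne
  obtain ⟨i, hi, hmin⟩ := Finset.exists_min_image
    (Finset.univ.filter fun i => N i ≠ M i) (rowSum M) ⟨i₀, by simpa using hi₀⟩
  simp only [Finset.mem_filter, Finset.mem_univ, true_and] at hi hmin
  obtain ⟨j, hMj, hNj⟩ := exists_true_false_of_ne (M i) (N i) (hr i) hi
  obtain ⟨i', hNi', hMi'⟩ := exists_true_false_of_ne (fun a => N a j) (fun a => M a j)
    (hc j).symm (fun he => by simpa [hMj, hNj] using congrFun he i)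
  have hlt : rowSum M i' < rowSum M i := by
    refine Finset.card_lt_card (Finset.ssubset_iff_of_subset ?_ |>.mpr ⟨j, ?_, ?_⟩)
    · intro j' hj'
      simp only [Finset.mem_filter, Finset.mem_univ, true_and] at hj' ⊢
      by_contra hf
      exact h i i' j j' hMj (by simpa using hf) hMi' hj'
    · simpa using hMj
    · simpa using hMi'
  have hle := hmin i' (fun he => by simp_all)
  omega

/-- A 0-1 matrix is lonesum iff it contains neither 2×2 permutation matrix as a submatrix. -/
theorem lonesum_iff_no_perm_submatrix (n k : ℕ) (M : Fin n → Fin k → Bool) :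
    Lonesum M ↔
      ¬ ∃ (i i' : Fin n) (j j' : Fin k), i < i' ∧ j < j' ∧
        ((M i j = true ∧ M i j' = false ∧ M i' j = false ∧ M i' j' = true) ∨
         (M i j = false ∧ M i j' = true ∧ M i' j = true ∧ M i' j' = false)) := by
  constructor
  · rintro hM ⟨i, i', j, j', -, -, ⟨h1, h2, h3, h4⟩ | ⟨h1, h2, h3, h4⟩⟩
    · exact not_lonesum_of_pattern M h1 h2 h3 h4 hM
    · exact not_lonesum_of_pattern M h3 h4 h1 h2 hM
  · intro hno
    refine lonesum_of_no_pattern M fun i i' j j' h1 h2 h3 h4 => hno ?_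
    have hi : i ≠ i' := by rintro rfl; simp_all
    have hj : j ≠ j' := by rintro rfl; simp_all
    rcases lt_or_gt_of_ne hi with hi | hi <;> rcases lt_or_gt_of_ne hj with hj | hj
    · exact ⟨i, i', j, j', hi, hj, Or.inl ⟨h1, h2, h3, h4⟩⟩
    · exact ⟨i, i', j', j, hi, hj, Or.inr ⟨h2, h1, h4, h3⟩⟩
    · exact ⟨i', i, j, j', hi, hj, Or.inr ⟨h3, h4, h1, h2⟩⟩
    · exact ⟨i', i, j', j, hi, hj, Or.inl ⟨h4, h3, h2, h1⟩⟩
end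

section
/- The number of Callan permutations for parameters n and k equals the poly-Bernoulli number B(n,k) = ∑_{m=0}^{min(n,k)} (m!)² · S(n+1,m+1) · S(k+1,m+1). -/
/-- A Callan permutation for parameters n, k: a permutation of {0,1,...,n+k+1} fixing 0
and n+k+1, such that consecutive positions holding two left values (values at most n) or two
right values (values at least n+1) are increasing. -/
def IsCallan (n k : ℕ) (f : Equiv.Perm (Fin (n + k + 2))) : Prop :=
  f 0 = 0 ∧ f (Fin.last (n + k + 1)) = Fin.last (n + k + 1) ∧
    ∀ i : Fin (n + k + 1),
      (((f i.castSucc : ℕ) ≤ n ∧ (f i.succ : ℕ) ≤ n) ∨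
        (n + 1 ≤ (f i.castSucc : ℕ) ∧ n + 1 ≤ (f i.succ : ℕ))) →
      f i.castSucc < f i.succ

namespace Callan

open Finset

/-! ### Counting surjections -/

/-- The functions `Fin a → ℕ` with image exactly `s`. -/
def onto (s : Finset ℕ) (a : ℕ) : Finset (Fin a → ℕ) :=
  {g ∈ Fintype.piFinset fun _ => s | univ.image g = s}

lemma mem_onto {s : Finset ℕ} {a : ℕ} {g : Fin a → ℕ} : g ∈ onto s a ↔ univ.image g = s := by
  simp only [onto, mem_filter, Fintype.mem_piFinset, and_iff_right_iff_imp]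
  rintro rfl i
  exact mem_image_of_mem _ (mem_univ i)

lemma image_insertNth {a : ℕ} (p : Fin (a + 1)) (x : ℕ) (g : Fin a → ℕ) :
    univ.image (p.insertNth x g : Fin (a + 1) → ℕ) = insert x (univ.image g) := by
  ext y
  simp only [mem_image, mem_univ, true_and, mem_insert, Fin.exists_iff_succAbove p,
    Fin.insertNth_apply_same, Fin.insertNth_apply_succAbove, eq_comm (a := x)]

/-- A function sending `p` to `x` has image `s` iff its restriction to the complement of `p` has
image `s` or `s.erase x`. -/
lemma card_pointed_aux {s : Finset ℕ} {x : ℕ} (hx : x ∈ s) {a : ℕ} (p : Fin (a + 1)) :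
    #{g ∈ onto s (a + 1) | g p = x} = #(onto s a) + #(onto (s.erase x) a) := by
  rw [← card_union_of_disjoint]
  · refine card_nbij' (fun g => p.removeNth g) (fun g => p.insertNth x g) ?_ ?_ ?_ ?_
    · intro g hg
      simp only [coe_filter, Set.mem_ofPred_eq, mem_onto] at hg
      obtain ⟨hg, rfl⟩ := hg
      have := image_insertNth p (g p) (p.removeNth g)
      rw [Fin.insertNth_self_removeNth, hg] at this
      simp only [coe_union, Set.mem_union, mem_coe, mem_onto]
      by_cases h : g p ∈ univ.image (p.removeNth g)
      · left; rw [this, insert_eq_of_mem h]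
      · right; rw [this, erase_insert h]
    · intro g hg
      simp only [coe_union, Set.mem_union, mem_coe, mem_onto] at hg
      simp only [coe_filter, Set.mem_ofPred_eq, mem_onto, image_insertNth,
        Fin.insertNth_apply_same, and_true]
      rcases hg with hg | hg <;> rw [hg]
      · exact insert_eq_of_mem hx
      · exact insert_erase hx
    · intro g hg
      simp only [coe_filter, Set.mem_ofPred_eq] at hg
      obtain ⟨-, rfl⟩ := hg
      simp
    · intro g _
      simp
  · rw [disjoint_left]
    intro g h1 h2
    rw [mem_onto] at h1 h2
    rw [h1] at h2
    exact notMem_erase x s (h2 ▸ hx)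

/-- The fibres over the value at `0` give the Stirling recurrence. -/
lemma card_onto (a : ℕ) : ∀ s : Finset ℕ, #(onto s a) = (#s).factorial * stirling a #s := by
  induction a with
  | zero =>
    intro s
    rcases s.eq_empty_or_nonempty with rfl | hs
    · simp [onto, stirling]
    · obtain ⟨b, hb⟩ := Nat.exists_eq_succ_of_ne_zero hs.card_pos.ne'
      rw [hb]
      simp only [stirling, mul_zero, card_eq_zero]
      ext g
      simp [mem_onto, hs.ne_empty.symm]
  | succ a ih =>
    intro s
    rw [card_eq_sum_card_fiberwise (f := fun g => g 0) (t := s)]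
    · rw [sum_congr rfl fun x hx => card_pointed_aux hx 0]
      simp only [ih]
      rw [sum_congr rfl fun x hx => by rw [card_erase_of_mem hx]]
      rw [sum_const, smul_eq_mul]
      rcases Nat.eq_zero_or_pos #s with h | h
      · simp [h, stirling]
      · obtain ⟨b, hb⟩ := Nat.exists_eq_succ_of_ne_zero h.ne'
        rw [hb]
        simp only [stirling, Nat.succ_eq_add_one, Nat.add_sub_cancel, Nat.factorial_succ]
        ring
    · intro g hg
      rw [mem_coe, mem_onto] at hg
      rw [← hg]
      exact mem_image_of_mem _ (mem_univ _)

/-- The functions from `Fin (a + 1)` onto `{0, …, m}` which take the value `x` at `p`. -/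
def pointed (a m : ℕ) (p : Fin (a + 1)) (x : ℕ) : Finset (Fin (a + 1) → ℕ) :=
  {g ∈ onto (range (m + 1)) (a + 1) | g p = x}

lemma card_pointed {a m x : ℕ} (p : Fin (a + 1)) (hx : x ≤ m) :
    #(pointed a m p x) = m.factorial * stirling (a + 1) (m + 1) := by
  have hx' : x ∈ range (m + 1) := mem_range.2 (by omega)
  rw [pointed, card_pointed_aux hx', card_onto, card_onto, card_erase_of_mem hx', card_range]
  simp only [stirling, Nat.add_sub_cancel, Nat.factorial_succ]
  ring

/-! ### Sorting colourings -/

/-- Colourings of the values by the numbers `0, …, 2m+1`, all used, even on left values and odd on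
right values, giving the first colour to the value `0` and the last colour to `n + k + 1`. -/
structure IsGoodColoring (n k m : ℕ) (c : Fin (n + k + 2) → ℕ) : Prop where
  parity : ∀ v, c v % 2 = if (v : ℕ) ≤ n then 0 else 1
  le : ∀ v, c v ≤ 2 * m + 1
  surj : ∀ j ≤ 2 * m + 1, ∃ v, c v = j
  zero : c 0 = 0
  last : c (Fin.last (n + k + 1)) = 2 * m + 1

section Sorting

variable {n k m : ℕ} {c : Fin (n + k + 2) → ℕ} {f : Equiv.Perm (Fin (n + k + 2))}

/-- No colour is skipped, since every colour is used. -/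
lemma IsGoodColoring.step (hc : IsGoodColoring n k m c) (hf : Monotone (c ∘ f))
    (i : Fin (n + k + 1)) :
    c (f i.succ) = c (f i.castSucc) ∨ c (f i.succ) = c (f i.castSucc) + 1 := by
  have h1 : c (f i.castSucc) ≤ c (f i.succ) := hf (Fin.castSucc_le_succ i)
  by_contra! h
  obtain ⟨v, hv⟩ := hc.surj (c (f i.castSucc) + 1) (by have := hc.le (f i.succ); omega)
  obtain ⟨j, rfl⟩ := f.surjective v
  rcases le_or_gt j i.castSucc with hj | hj
  · have : c (f j) ≤ c (f i.castSucc) := hf hj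
    omega
  · have : c (f i.succ) ≤ c (f j) := hf (Fin.castSucc_lt_iff_succ_le.1 hj)
    omega

/-- Two neighbours on the same side have colours of equal parity differing by at most `1`, so their
colours agree and sorting puts them in increasing order. -/
lemma isCallan_sort (hc : IsGoodColoring n k m c) : IsCallan n k (Tuple.sort c) := by
  obtain ⟨hm, ht⟩ := (Tuple.eq_sort_iff (f := c) (σ := Tuple.sort c)).1 rfl
  generalize Tuple.sort c = f at hm ht
  refine ⟨?_, ?_, fun i hi => ht _ _ (Fin.castSucc_lt_succ (i := i)) ?_⟩
  · obtain ⟨i, hi⟩ := f.surjective 0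
    rcases eq_or_lt_of_le (Fin.zero_le i) with rfl | h
    · exact hi
    · have h1 : c (f 0) ≤ c (f i) := hm h.le
      have h2 := ht 0 i h (by rw [hi, hc.zero] at *; omega)
      rw [hi] at h2
      exact absurd h2 (Fin.not_lt_zero _)
  · obtain ⟨i, hi⟩ := f.surjective (Fin.last _)
    rcases eq_or_lt_of_le (Fin.le_last i) with rfl | h
    · exact hi
    · have h1 : c (f i) ≤ c (f (Fin.last _)) := hm h.le
      have h3 := hc.le (f (Fin.last _))
      have h2 := ht i _ h (by rw [hi, hc.last] at *; omega)
      rw [hi] at h2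
      exact absurd h2 (Fin.le_last _).not_gt
  · have h1 := hc.parity (f i.castSucc)
    have h2 := hc.parity (f i.succ)
    have h3 := hc.step hm i
    split_ifs at h1 h2 <;> omega

/-- The colouring is recovered along the word: the colour starts at `0`, and grows by `0` or `1` at
each step, the parity deciding which. -/
lemma IsGoodColoring.eq_of_sort_eq {m' : ℕ} {c' : Fin (n + k + 2) → ℕ}
    (hc : IsGoodColoring n k m c) (hc' : IsGoodColoring n k m' c')
    (h : Tuple.sort c = Tuple.sort c') : c = c' := by
  have hm := Tuple.monotone_sort c
  have hm' := Tuple.monotone_sort c'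
  have h0 := (isCallan_sort hc).1
  rw [← h] at hm'
  generalize Tuple.sort c = f at hm hm' h0
  have key : ∀ i, c (f i) = c' (f i) := by
    intro i
    induction i using Fin.induction with
    | zero => rw [h0, hc.zero, hc'.zero]
    | succ i ih =>
      have h1 := hc.step hm i
      have h2 := hc'.step hm' i
      have h3 := (hc.parity (f i.succ)).trans (hc'.parity (f i.succ)).symm
      omega
  ext v
  obtain ⟨i, rfl⟩ := f.surjective v
  exact key i

/-- The number of places before position `i` where the sequence `t` changes its value. -/
def changes (t : ℕ → ℕ) : ℕ → ℕ
  | 0 => 0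
  | i + 1 => changes t i + if t (i + 1) = t i then 0 else 1

lemma changes_mono (t : ℕ → ℕ) : Monotone (changes t) :=
  monotone_nat_of_le_succ fun i => by simp [changes]

lemma changes_mod {t : ℕ → ℕ} (ht : ∀ i, t i ≤ 1) (h0 : t 0 = 0) (i : ℕ) :
    changes t i % 2 = t i := by
  induction i with
  | zero => simp [changes, h0]
  | succ i ih =>
    have := ht i
    have := ht (i + 1)
    simp only [changes]
    split_ifs <;> omega

lemma exists_changes_eq (t : ℕ → ℕ) (i : ℕ) : ∀ j ≤ changes t i, ∃ l ≤ i, changes t l = j := by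
  induction i with
  | zero => intro j hj; exact ⟨0, le_rfl, by simp [changes] at hj ⊢; omega⟩
  | succ i ih =>
    intro j hj
    rcases eq_or_lt_of_le hj with h | h
    · exact ⟨i + 1, le_rfl, h.symm⟩
    · obtain ⟨l, hl, e⟩ := ih j (by simp only [changes] at h; split_ifs at h <;> omega)
      exact ⟨l, by omega, e⟩

/-- Colour each value of a Callan permutation by the number of side changes before its position. -/
lemma _root_.IsCallan.exists_coloring (hf : IsCallan n k f) :
    ∃ m c, IsGoodColoring n k m c ∧ Tuple.sort c = f := by
  obtain ⟨h0, hl, hs⟩ := hf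
  set t : ℕ → ℕ := fun i =>
    if h : i < n + k + 2 then if (f ⟨i, h⟩ : ℕ) ≤ n then 0 else 1 else 0 with ht
  have t1 : ∀ i, t i ≤ 1 := by
    intro i
    simp only [ht]
    split_ifs <;> omega
  have tf : ∀ i : Fin (n + k + 2), t i = if (f i : ℕ) ≤ n then 0 else 1 := by
    intro i
    simp [ht]
  have t0 : t 0 = 0 := by
    have := tf 0
    simpa [h0] using this
  have tl : t (n + k + 1) = 1 := by
    have := tf (Fin.last (n + k + 1))
    rw [hl] at this
    simp only [Fin.val_last] at this
    rw [this, if_neg (by omega)]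
  have hmod := changes_mod t1 t0
  have hodd := hmod (n + k + 1)
  rw [tl] at hodd
  -- Inside a run of equal colours the word is increasing.
  have hinc : ∀ (i j : Fin (n + k + 2)), i < j → changes t i = changes t j → f i < f j := by
    intro i j
    induction j using Fin.induction with
    | zero => intro h; exact absurd h (Fin.not_lt_zero _)
    | succ j ih =>
      intro hij he
      have hle : i ≤ j.castSucc := Fin.le_castSucc_iff.2 hij
      have e1 : changes t i ≤ changes t j.castSucc := changes_mono t hle
      have e2 : changes t j.succ = changes t j.castSucc +
        if t j.succ = t j.castSucc then 0 else 1 := by simp [changes]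
      have e3 : t j.succ = t j.castSucc := by
        by_contra h
        rw [if_neg h] at e2
        omega
      rw [if_pos e3] at e2
      have hlt : f j.castSucc < f j.succ := by
        apply hs
        rw [tf, tf] at e3
        split_ifs at e3 <;> omega
      rcases eq_or_lt_of_le hle with h | h
      · rwa [h]
      · exact (ih h (by omega)).trans hlt
  refine ⟨changes t (n + k + 1) / 2, fun v => changes t (f.symm v), ⟨?_, ?_, ?_, ?_, ?_⟩, ?_⟩
  · intro v
    rw [hmod, tf]
    simp
  · intro v
    have : changes t (f.symm v) ≤ changes t (n + k + 1) := changes_mono t (by omega)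
    omega
  · intro j hj
    obtain ⟨l, hl', e⟩ := exists_changes_eq t (n + k + 1) j (by omega)
    exact ⟨f ⟨l, by omega⟩, by simpa using e⟩
  · have : f.symm 0 = 0 := by rw [Equiv.symm_apply_eq, h0]
    simp [this, changes]
  · have : f.symm (Fin.last (n + k + 1)) = Fin.last (n + k + 1) := by
      rw [Equiv.symm_apply_eq, hl]
    simp only [this, Fin.val_last]
    omega
  · symm
    rw [Tuple.eq_sort_iff]
    constructor
    · intro i j hij
      simpa using changes_mono t hij
    · intro i j hij he
      exact hinc i j hij (by simpa using he)

end Sorting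

/-! ### Colourings as pairs of surjections -/

/-- The colouring with colours `2 * g` on left values and `2 * h + 1` on right values. -/
def merge (n k : ℕ) (g : Fin (n + 1) → ℕ) (h : Fin (k + 1) → ℕ) (v : Fin (n + k + 2)) : ℕ :=
  if hv : (v : ℕ) ≤ n then 2 * g ⟨v, by omega⟩ else 2 * h ⟨v - (n + 1), by omega⟩ + 1

section Merge

variable {n k m : ℕ} {g : Fin (n + 1) → ℕ} {h : Fin (k + 1) → ℕ}

lemma merge_left (g : Fin (n + 1) → ℕ) (h : Fin (k + 1) → ℕ) (i : Fin (n + 1)) :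
    merge n k g h ⟨i, by omega⟩ = 2 * g i := by
  simp [merge, Nat.lt_succ_iff.1 i.2]

lemma merge_right (g : Fin (n + 1) → ℕ) (h : Fin (k + 1) → ℕ) (i : Fin (k + 1)) :
    merge n k g h ⟨n + 1 + i, by omega⟩ = 2 * h i + 1 := by
  have : ¬ (n + 1 + (i : ℕ) ≤ n) := by omega
  simp [merge, this]

lemma mem_pointed {a m x : ℕ} {p : Fin (a + 1)} {g : Fin (a + 1) → ℕ} :
    g ∈ pointed a m p x ↔ (∀ i, g i ≤ m) ∧ (∀ j ≤ m, ∃ i, g i = j) ∧ g p = x := by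
  simp only [pointed, mem_filter, mem_onto, Finset.ext_iff, mem_image, mem_univ, true_and,
    mem_range, Nat.lt_succ_iff, ← and_assoc]
  refine and_congr_left fun _ => ⟨fun H => ⟨fun i => (H _).1 ⟨i, rfl⟩, fun j => (H j).2⟩, ?_⟩
  rintro ⟨H1, H2⟩ j
  exact ⟨by rintro ⟨i, rfl⟩; exact H1 i, H2 j⟩

lemma isGoodColoring_merge (hg : g ∈ pointed n m 0 0) (hh : h ∈ pointed k m (Fin.last k) m) :
    IsGoodColoring n k m (merge n k g h) := by
  rw [mem_pointed] at hg hh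
  obtain ⟨g1, g2, g3⟩ := hg
  obtain ⟨h1, h2, h3⟩ := hh
  refine ⟨?_, ?_, ?_, ?_, ?_⟩
  · intro v
    simp only [merge]
    split_ifs <;> omega
  · intro v
    simp only [merge]
    split_ifs
    · have := g1 ⟨v, by omega⟩
      omega
    · have := h1 ⟨v - (n + 1), by omega⟩
      omega
  · intro j hj
    rcases Nat.even_or_odd' j with ⟨l, rfl | rfl⟩
    · obtain ⟨i, hi⟩ := g2 l (by omega)
      exact ⟨_, (merge_left g h i).trans (by rw [hi])⟩
    · obtain ⟨i, hi⟩ := h2 l (by omega)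
      exact ⟨_, (merge_right g h i).trans (by rw [hi])⟩
  · exact (merge_left g h 0).trans (by rw [g3])
  · have := merge_right g h (Fin.last k)
    rw [h3] at this
    rw [← this]
    congr 1
    ext
    simp
    omega

lemma merge_injective {g' : Fin (n + 1) → ℕ} {h' : Fin (k + 1) → ℕ}
    (e : merge n k g h = merge n k g' h') : g = g' ∧ h = h' := by
  constructor <;> ext i
  · have := merge_left g h i
    rw [e, merge_left] at this
    omega
  · have := merge_right g h i
    rw [e, merge_right] at this
    omega

lemma IsGoodColoring.exists_merge {c : Fin (n + k + 2) → ℕ} (hc : IsGoodColoring n k m c) :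
    ∃ g ∈ pointed n m 0 0, ∃ h ∈ pointed k m (Fin.last k) m, merge n k g h = c := by
  have hpar := hc.parity
  refine ⟨fun i => c ⟨i, by omega⟩ / 2, mem_pointed.2 ⟨?_, ?_, ?_⟩,
    fun i => c ⟨n + 1 + i, by omega⟩ / 2, mem_pointed.2 ⟨?_, ?_, ?_⟩, ?_⟩
  · intro i
    have := hc.le ⟨i, by omega⟩
    omega
  · intro j hj
    obtain ⟨v, hv⟩ := hc.surj (2 * j) (by omega)
    have h1 := hpar v
    have h2 : (v : ℕ) ≤ n := by
      by_contra h
      rw [if_neg h] at h1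
      omega
    exact ⟨⟨v, by omega⟩, by simp [hv]⟩
  · have := hc.zero
    exact Nat.div_eq_of_lt (lt_of_eq_of_lt this two_pos)
  · intro i
    have := hc.le ⟨n + 1 + i, by omega⟩
    omega
  · intro j hj
    obtain ⟨v, hv⟩ := hc.surj (2 * j + 1) (by omega)
    have h1 := hpar v
    have h2 : ¬ (v : ℕ) ≤ n := by
      intro h
      rw [if_pos h] at h1
      omega
    refine ⟨⟨v - (n + 1), by omega⟩, ?_⟩
    have : (⟨n + 1 + (v - (n + 1)), by omega⟩ : Fin (n + k + 2)) = v := by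
      ext
      simp only
      omega
    simp only [this, hv]
    omega
  · have : (⟨n + 1 + (Fin.last k : Fin (k + 1)), by simp; omega⟩ : Fin (n + k + 2)) =
        Fin.last (n + k + 1) := by
      ext
      simp
      omega
    simp only [this, hc.last]
    omega
  · ext v
    have h1 := hpar v
    simp only [merge]
    split_ifs at h1 ⊢ with hv
    · simp only [Fin.eta]
      omega
    · have : (⟨n + 1 + (v - (n + 1)), by omega⟩ : Fin (n + k + 2)) = v := by
        ext
        simp only
        omega
      simp only [this]
      omega

lemma le_of_mem_pointed {a m x : ℕ} {p : Fin (a + 1)} {g : Fin (a + 1) → ℕ}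
    (hg : g ∈ pointed a m p x) : m ≤ a := by
  have h := (mem_onto.1 (mem_filter.1 hg).1)
  have := card_image_le (s := univ) (f := g)
  rw [h] at this
  simpa using this

end Merge

end Callan

open Callan in
/-- The number of Callan permutations for parameters n and k equals the
poly-Bernoulli number B(n,k). -/
theorem card_callan_eq_polyBernoulli (n k : ℕ) :
    Nat.card {f : Equiv.Perm (Fin (n + k + 2)) // IsCallan n k f} = polyBernoulli n k := by
  classical
  rw [Nat.card_eq_fintype_card, Fintype.card_subtype]
  let T : Finset (Σ _ : ℕ, (Fin (n + 1) → ℕ) × (Fin (k + 1) → ℕ)) :=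
    (Finset.range (min n k + 1)).sigma fun m =>
      pointed n m 0 0 ×ˢ pointed k m (Fin.last k) m
  have hT : T.card = polyBernoulli n k := by
    rw [Finset.card_sigma, polyBernoulli]
    refine Finset.sum_congr rfl fun m _ => ?_
    rw [Finset.card_product, card_pointed _ (Nat.zero_le m), card_pointed _ le_rfl]
    ring
  rw [← hT]
  symm
  refine Finset.card_bij (fun x _ => Tuple.sort (merge n k x.2.1 x.2.2)) ?_ ?_ ?_
  · rintro ⟨m, g, h⟩ hx
    simp only [T, Finset.mem_sigma, Finset.mem_product] at hx
    simpa using isCallan_sort (isGoodColoring_merge hx.2.1 hx.2.2)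
  · rintro ⟨m, g, h⟩ hx ⟨m', g', h'⟩ hx' e
    simp only [T, Finset.mem_sigma, Finset.mem_product] at hx hx'
    obtain ⟨rfl, rfl⟩ := merge_injective ((isGoodColoring_merge hx.2.1 hx.2.2).eq_of_sort_eq
      (isGoodColoring_merge hx'.2.1 hx'.2.2) e)
    -- Both `m` and `m'` are the value of `h` at the last right value.
    obtain rfl : m = m' := (mem_pointed.1 hx.2.2).2.2.symm.trans (mem_pointed.1 hx'.2.2).2.2
    rfl
  · intro f hf
    obtain ⟨m, c, hc, rfl⟩ := IsCallan.exists_coloring (Finset.mem_filter.1 hf).2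
    obtain ⟨g, hg, h, hh, rfl⟩ := hc.exists_merge
    have h1 := le_of_mem_pointed hg
    have h2 := le_of_mem_pointed hh
    refine ⟨⟨m, g, h⟩, ?_, rfl⟩
    simp only [T, Finset.mem_sigma, Finset.mem_product, Finset.mem_range]
    exact ⟨by omega, hg, hh⟩
end

section
/- The number of max-ascending permutations for parameters n and k equals the poly-Bernoulli number B(n,k) = ∑_{m=0}^{min(n,k)} (m!)² · S(n+1,m+1) · S(k+1,m+1). -/
/-- A max-ascending permutation for parameters n, k: a permutation of {0,1,...,n+k+1}
fixing 0 and n+k+1, such that whenever consecutive values v and v+1 both occupy left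
positions (positions at most n) or both occupy right positions (positions at least n+1),
the position of v precedes the position of v+1. -/
def IsMaxAscending (n k : ℕ) (f : Equiv.Perm (Fin (n + k + 2))) : Prop :=
  f 0 = 0 ∧ f (Fin.last (n + k + 1)) = Fin.last (n + k + 1) ∧
    ∀ v : Fin (n + k + 1),
      (((f⁻¹ v.castSucc : ℕ) ≤ n ∧ (f⁻¹ v.succ : ℕ) ≤ n) ∨
        (n + 1 ≤ (f⁻¹ v.castSucc : ℕ) ∧ n + 1 ≤ (f⁻¹ v.succ : ℕ))) →
      f⁻¹ v.castSucc < f⁻¹ v.succ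

/-! ### Runs of a two-coloured sequence -/

/-- The number of colour changes among the first `v` steps of the sequence `s`, that is, the
index (from `0`) of the maximal constant run of `s` containing position `v`. -/
def runIndex (s : ℕ → Bool) : ℕ → ℕ
  | 0 => 0
  | v + 1 => runIndex s v + if s v = s (v + 1) then 0 else 1

theorem runIndex_monotone (s : ℕ → Bool) : Monotone (runIndex s) :=
  monotone_nat_of_le_succ fun v => by simp [runIndex]

theorem runIndex_mod_two (s : ℕ → Bool) (v : ℕ) :
    runIndex s v % 2 = if s v = s 0 then 0 else 1 := by
  induction v with
  | zero => simp [runIndex]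
  | succ v ih =>
    simp only [runIndex]
    rw [Nat.add_mod, ih]
    cases s v <;> cases s (v + 1) <;> cases s 0 <;> simp

/-- The run index grows in steps of at most one, so no value is skipped. -/
theorem exists_runIndex_eq (s : ℕ → Bool) (v : ℕ) :
    ∀ j ≤ runIndex s v, ∃ w ≤ v, runIndex s w = j := by
  induction v with
  | zero => intro j hj; exact ⟨0, le_rfl, by simp [runIndex] at hj ⊢; omega⟩
  | succ v ih =>
    intro j hj
    by_cases h : j ≤ runIndex s v
    · obtain ⟨w, hw, e⟩ := ih j h
      exact ⟨w, by omega, e⟩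
    · refine ⟨v + 1, le_rfl, ?_⟩
      have : runIndex s (v + 1) ≤ runIndex s v + 1 := by
        simp only [runIndex]; split_ifs <;> omega
      omega

/-! ### Max-ascending permutations and keys -/

/-- Whether the value `v` sits at a left position of `f`. The value `false` for `v` out of
range is never used. -/
def sideAt (n k : ℕ) (f : Equiv.Perm (Fin (n + k + 2))) (v : ℕ) : Bool :=
  if h : v < n + k + 2 then decide ((f⁻¹ ⟨v, h⟩ : ℕ) ≤ n) else false

/-- A key: a labelling of the positions by an initial segment `{0, …, K (last)}` of `ℕ`, all of
whose labels occur, with even labels on the left, odd labels on the right, the least label at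
the first position and the greatest at the last. -/
structure IsKey (n k : ℕ) (K : Fin (n + k + 2) → ℕ) : Prop where
  parity : ∀ p, K p % 2 = if (p : ℕ) ≤ n then 0 else 1
  zero : K 0 = 0
  le_last : ∀ p, K p ≤ K (Fin.last _)
  surj : ∀ j ≤ K (Fin.last _), ∃ p, K p = j

/-- Labelling each position by the index of the run of its value gives a key. -/
theorem IsMaxAscending.isKey {n k : ℕ} {f : Equiv.Perm (Fin (n + k + 2))}
    (hf : IsMaxAscending n k f) : IsKey n k (fun p => runIndex (sideAt n k f) (f p)) := by
  obtain ⟨h0, hl, -⟩ := hf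
  have hs : ∀ p, sideAt n k f (f p) = decide ((p : ℕ) ≤ n) := by
    intro p; simp [sideAt]
  have hs0 : sideAt n k f 0 = true := by
    have := hs 0
    rw [h0] at this
    simpa using this
  refine ⟨fun p => ?_, ?_, fun p => ?_, fun j hj => ?_⟩
  · simp [runIndex_mod_two, hs, hs0]
  · simp [h0, runIndex]
  · rw [hl]; exact runIndex_monotone _ (Fin.le_last (f p))
  · obtain ⟨w, hw, e⟩ := exists_runIndex_eq _ _ j hj
    refine ⟨f⁻¹ ⟨w, ?_⟩, ?_⟩
    · rw [hl] at hw; simp at hw; omega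
    · simpa using e

/-- A max-ascending permutation is recovered from its key by stable sorting: values in the same
run have increasing positions. -/
theorem IsMaxAscending.inv_eq_sort {n k : ℕ} {f : Equiv.Perm (Fin (n + k + 2))}
    (hf : IsMaxAscending n k f) :
    f⁻¹ = Tuple.sort (fun p => runIndex (sideAt n k f) (f p)) := by
  rw [Tuple.eq_sort_iff]
  obtain ⟨-, -, hm⟩ := hf
  refine ⟨fun i j hij => by simpa using runIndex_monotone _ hij, ?_⟩
  have key : ∀ d i : ℕ, ∀ h : i + d + 1 < n + k + 2,
      runIndex (sideAt n k f) i = runIndex (sideAt n k f) (i + d + 1) →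
      f⁻¹ ⟨i, by omega⟩ < f⁻¹ ⟨i + d + 1, h⟩ := by
    intro d i
    have step : ∀ v (h : v + 1 < n + k + 2),
        runIndex (sideAt n k f) v = runIndex (sideAt n k f) (v + 1) →
        f⁻¹ ⟨v, by omega⟩ < f⁻¹ ⟨v + 1, h⟩ := by
      intro v h e
      have hs : sideAt n k f v = sideAt n k f (v + 1) := by
        by_contra hne
        simp [runIndex, hne] at e
      refine hm ⟨v, by omega⟩ ?_
      simp only [sideAt, h, (by omega : v < n + k + 2), dif_pos, decide_eq_decide] at hs
      simp only [Fin.castSucc_mk, Fin.succ_mk]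
      omega
    induction d with
    | zero => intro h e; exact step i h e
    | succ d ih =>
      intro h e
      have h1 := runIndex_monotone (sideAt n k f) (by omega : i ≤ i + d + 1)
      have h2 := runIndex_monotone (sideAt n k f) (by omega : i + d + 1 ≤ i + (d + 1) + 1)
      exact (ih (by omega) (by omega)).trans (step (i + d + 1) h (by
        have : i + d + 1 + 1 = i + (d + 1) + 1 := by omega
        rw [this]; omega))
  intro i j hij e
  obtain ⟨i, hi⟩ := i
  obtain ⟨j, hj⟩ := j
  obtain ⟨d, rfl⟩ : ∃ d, j = i + d + 1 := ⟨j - i - 1, by simp at hij; omega⟩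
  exact key d i hj (by simpa using e)

theorem sort_stable {N : ℕ} (K : Fin N → ℕ) {i j : Fin N} (hij : i < j)
    (h : K (Tuple.sort K i) = K (Tuple.sort K j)) : Tuple.sort K i < Tuple.sort K j :=
  (Tuple.eq_sort_iff.1 rfl).2 i j hij h

theorem IsKey.sort_zero {n k : ℕ} {K : Fin (n + k + 2) → ℕ} (hK : IsKey n k K) :
    Tuple.sort K 0 = 0 := by
  by_contra hne
  have hpos : 0 < (Tuple.sort K)⁻¹ 0 := by
    rw [Fin.pos_iff_ne_zero]
    intro h
    exact hne (by rw [← h]; simpa using h.symm)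
  have hle := Tuple.monotone_sort K hpos.le
  have := sort_stable K hpos (by
    simp [hK.zero] at hle ⊢; exact hle)
  simp at this

theorem IsKey.sort_last {n k : ℕ} {K : Fin (n + k + 2) → ℕ} (hK : IsKey n k K) :
    Tuple.sort K (Fin.last (n + k + 1)) = Fin.last (n + k + 1) := by
  by_contra hne
  have hlt : (Tuple.sort K)⁻¹ (Fin.last (n + k + 1)) < Fin.last (n + k + 1) := by
    rw [Fin.lt_last_iff_ne_last]
    intro h
    apply hne
    conv_lhs => rw [← h]
    simp
  have hle := Tuple.monotone_sort K hlt.le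
  have := sort_stable K hlt (le_antisymm hle (by simpa using hK.le_last _))
  simp at this
  exact absurd this (not_lt.2 (Fin.le_last _))

/-- Since a key takes every value up to its maximum, its sorted list of values has steps `0` or
`1`. -/
theorem IsKey.consecutive {n k : ℕ} {K : Fin (n + k + 2) → ℕ} (hK : IsKey n k K)
    (v : Fin (n + k + 1)) :
    K (Tuple.sort K v.castSucc) ≤ K (Tuple.sort K v.succ) ∧
      K (Tuple.sort K v.succ) ≤ K (Tuple.sort K v.castSucc) + 1 := by
  refine ⟨Tuple.monotone_sort K v.castSucc_lt_succ.le, ?_⟩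
  by_contra! hlt
  obtain ⟨p, hp⟩ := hK.surj (K (Tuple.sort K v.castSucc) + 1) (hlt.le.trans (hK.le_last _))
  obtain ⟨w, rfl⟩ := (Tuple.sort K).surjective p
  rcases le_or_gt w v.castSucc with h | h
  · have := Tuple.monotone_sort K h
    simp only [Function.comp_apply] at this
    omega
  · have := Tuple.monotone_sort K (Fin.castSucc_lt_iff_succ_le.1 h)
    simp only [Function.comp_apply] at this
    omega

/-- Consecutive values on the same side have keys of equal parity differing by at most one, hence
equal keys, and stability of the sort orders their positions. -/
theorem IsKey.isMaxAscending {n k : ℕ} {K : Fin (n + k + 2) → ℕ} (hK : IsKey n k K) :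
    IsMaxAscending n k (Tuple.sort K)⁻¹ := by
  refine ⟨?_, ?_, fun v hv => ?_⟩
  · rw [Equiv.Perm.inv_eq_iff_eq, hK.sort_zero]
  · rw [Equiv.Perm.inv_eq_iff_eq, hK.sort_last]
  · rw [inv_inv] at hv ⊢
    refine sort_stable K v.castSucc_lt_succ ?_
    have h := hK.consecutive v
    have h1 := hK.parity (Tuple.sort K v.castSucc)
    have h2 := hK.parity (Tuple.sort K v.succ)
    split_ifs at h1 h2 <;> omega

/-- In the permutation sorted by a key, the run index of each value is the key of its position:
by parity, the key grows exactly when the side changes. -/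
theorem IsKey.runIndex_eq {n k : ℕ} {K : Fin (n + k + 2) → ℕ} (hK : IsKey n k K) :
    ∀ v (h : v < n + k + 2),
      runIndex (sideAt n k (Tuple.sort K)⁻¹) v = K (Tuple.sort K ⟨v, h⟩) := by
  intro v
  induction v with
  | zero =>
    intro h
    have : (⟨0, h⟩ : Fin (n + k + 2)) = 0 := rfl
    rw [this, hK.sort_zero, hK.zero]; rfl
  | succ v ih =>
    intro h
    have hv := hK.consecutive ⟨v, by omega⟩
    have h1 := hK.parity (Tuple.sort K ⟨v, by omega⟩)
    have h2 := hK.parity (Tuple.sort K ⟨v + 1, h⟩)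
    simp only [Fin.castSucc_mk, Fin.succ_mk] at hv
    simp only [runIndex, ih (by omega)]
    simp only [sideAt, inv_inv, h, (by omega : v < n + k + 2), dif_pos, decide_eq_decide]
    split_ifs at h1 h2 ⊢ <;> omega

theorem card_maxAscending_eq_card_isKey (n k : ℕ) :
    Nat.card {f : Equiv.Perm (Fin (n + k + 2)) // IsMaxAscending n k f} =
      Nat.card {K : Fin (n + k + 2) → ℕ // IsKey n k K} := by
  refine Nat.card_congr
    { toFun := fun f => ⟨_, f.2.isKey⟩
      invFun := fun K => ⟨_, K.2.isMaxAscending⟩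
      left_inv := fun f => Subtype.ext ?_
      right_inv := fun K => Subtype.ext (funext fun p => ?_) }
  · exact (congrArg (·⁻¹) f.2.inv_eq_sort.symm).trans (inv_inv _)
  · simp [K.2.runIndex_eq _ (Fin.is_lt _)]

/-! ### Keys as pairs of pinned surjections -/

/-- The labelling with labels `2 * L i` on the left positions and `2 * R j + 1` on the right
positions. -/
def keyOf {n k m : ℕ} (L : Fin (n + 1) → Fin (m + 1)) (R : Fin (k + 1) → Fin (m + 1))
    (p : Fin (n + k + 2)) : ℕ :=
  if h : (p : ℕ) ≤ n then 2 * (L ⟨p, by omega⟩ : ℕ) else 2 * (R ⟨p - (n + 1), by omega⟩ : ℕ) + 1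

theorem keyOf_left {n k m : ℕ} (L : Fin (n + 1) → Fin (m + 1)) (R : Fin (k + 1) → Fin (m + 1))
    (i : Fin (n + 1)) : keyOf L R ⟨i, by omega⟩ = 2 * (L i : ℕ) := by
  simp [keyOf, (by omega : (i : ℕ) ≤ n)]

theorem keyOf_right {n k m : ℕ} (L : Fin (n + 1) → Fin (m + 1)) (R : Fin (k + 1) → Fin (m + 1))
    (j : Fin (k + 1)) : keyOf L R ⟨n + 1 + j, by omega⟩ = 2 * (R j : ℕ) + 1 := by
  rw [keyOf, dif_neg (by simp; omega)]
  simp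

theorem keyOf_last {n k m : ℕ} (L : Fin (n + 1) → Fin (m + 1)) (R : Fin (k + 1) → Fin (m + 1))
    (h : R (Fin.last k) = Fin.last m) : keyOf L R (Fin.last _) = 2 * m + 1 := by
  have := keyOf_right L R (Fin.last k)
  rw [h] at this
  simp only [Fin.val_last] at this
  rw [← this]
  congr 1
  ext; simp; omega

/-- Surjections `Fin (a + 1) → Fin (b + 1)` sending `p` to `x`; equivalently, ordered partitions
into `b + 1` blocks in which `p` lies in block `x`. -/
abbrev PinnedSurj (a b : ℕ) (p : Fin (a + 1)) (x : Fin (b + 1)) : Type :=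
  {f : Fin (a + 1) → Fin (b + 1) // Function.Surjective f ∧ f p = x}

theorem isKey_keyOf {n k m : ℕ} (L : PinnedSurj n m 0 0)
    (R : PinnedSurj k m (Fin.last k) (Fin.last m)) : IsKey n k (keyOf L.1 R.1) := by
  obtain ⟨L, hLs, hL⟩ := L
  obtain ⟨R, hRs, hR⟩ := R
  refine ⟨fun p => ?_, ?_, fun p => ?_, fun j hj => ?_⟩
  · simp only [keyOf]; split_ifs <;> omega
  · have := keyOf_left L R 0
    rw [hL] at this
    simpa using this
  · rw [keyOf_last L R hR]
    simp only [keyOf]; split_ifs <;> omega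
  · rw [keyOf_last L R hR] at hj
    obtain ⟨t, rfl | rfl⟩ := Nat.even_or_odd' j
    · obtain ⟨i, hi⟩ := hLs ⟨t, by omega⟩
      exact ⟨⟨i, by omega⟩, by rw [keyOf_left]; simp [hi]⟩
    · obtain ⟨i, hi⟩ := hRs ⟨t, by omega⟩
      exact ⟨⟨n + 1 + i, by omega⟩, by rw [keyOf_right]; simp [hi]⟩

theorem IsKey.exists_eq_keyOf {n k : ℕ} {K : Fin (n + k + 2) → ℕ} (hK : IsKey n k K) :
    ∃ (m : Fin (min n k + 1)) (L : PinnedSurj n m 0 0)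
      (R : PinnedSurj k m (Fin.last k) (Fin.last m)), keyOf L.1 R.1 = K := by
  obtain ⟨hpar, h0, hle, hsurj⟩ := hK
  have hl := hpar (Fin.last _)
  rw [if_neg (by simp)] at hl
  obtain ⟨m, hm⟩ : ∃ m, K (Fin.last _) = 2 * m + 1 := ⟨K (Fin.last _) / 2, by omega⟩
  rw [hm] at hle hsurj
  let L : Fin (n + 1) → Fin (m + 1) := fun i =>
    ⟨K ⟨i, by omega⟩ / 2, by have := hle ⟨i, by omega⟩; omega⟩
  let R : Fin (k + 1) → Fin (m + 1) := fun i =>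
    ⟨K ⟨n + 1 + i, by omega⟩ / 2, by have := hle ⟨n + 1 + i, by omega⟩; omega⟩
  have hL : Function.Surjective L := by
    intro t
    obtain ⟨p, hp⟩ := hsurj (2 * t) (by omega)
    have := hpar p
    split_ifs at this with h
    · exact ⟨⟨p, by omega⟩, by ext; simp [L, hp]⟩
    · omega
  have hR : Function.Surjective R := by
    intro t
    obtain ⟨p, hp⟩ := hsurj (2 * t + 1) (by omega)
    have := hpar p
    split_ifs at this with h
    · omega
    · refine ⟨⟨p - (n + 1), by omega⟩, ?_⟩
      ext
      simp [R, (by omega : n + 1 + ((p : ℕ) - (n + 1)) = p), hp]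
      omega
  have hmn : m ≤ n := by simpa using Fintype.card_le_of_surjective L hL
  have hmk : m ≤ k := by simpa using Fintype.card_le_of_surjective R hR
  refine ⟨⟨m, by omega⟩, ⟨L, hL, ?_⟩, ⟨R, hR, ?_⟩, ?_⟩
  · ext; simp [L, h0]
  · ext
    have : (⟨n + 1 + k, by omega⟩ : Fin (n + k + 2)) = Fin.last (n + k + 1) := by
      ext; simp; omega
    simp [R, this, hm]; omega
  · funext p
    have := hpar p
    simp only [keyOf]
    split_ifs at this ⊢ with h
    · simp [L]; omega
    · simp [R, (by omega : n + 1 + ((p : ℕ) - (n + 1)) = p)]; omega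

theorem card_isKey (n k : ℕ) :
    Nat.card {K : Fin (n + k + 2) → ℕ // IsKey n k K} =
      Nat.card (Σ m : Fin (min n k + 1), PinnedSurj n m 0 0 ×
        PinnedSurj k m (Fin.last k) (Fin.last m)) := by
  symm
  refine Nat.card_eq_of_bijective
    (fun x => ⟨keyOf x.2.1.1 x.2.2.1, isKey_keyOf x.2.1 x.2.2⟩) ⟨?_, ?_⟩
  · rintro ⟨m, L, R⟩ ⟨m', L', R'⟩ h
    have h : keyOf L.1 R.1 = keyOf L'.1 R'.1 := congrArg Subtype.val h
    obtain rfl : m = m' := by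
      have := congrFun h (Fin.last _)
      rw [keyOf_last _ _ R.2.2, keyOf_last _ _ R'.2.2] at this
      ext; omega
    obtain rfl : L = L' := by
      refine Subtype.ext (funext fun i => Fin.ext ?_)
      have := congrFun h ⟨i, by omega⟩
      rw [keyOf_left, keyOf_left] at this
      omega
    obtain rfl : R = R' := by
      refine Subtype.ext (funext fun i => Fin.ext ?_)
      have := congrFun h ⟨n + 1 + i, by omega⟩
      rw [keyOf_right, keyOf_right] at this
      omega
    rfl
  · rintro ⟨K, hK⟩
    obtain ⟨m, L, R, rfl⟩ := hK.exists_eq_keyOf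
    exact ⟨⟨m, L, R⟩, rfl⟩

/-! ### Counting surjections -/

/-- Away from `p`, a surjection sending `p` to `x` is either still surjective or misses exactly
the value `x`. -/
theorem card_pinnedSurj (a b : ℕ) (p : Fin (a + 1)) (x : Fin (b + 1)) :
    Nat.card (PinnedSurj a b p x) =
      Nat.card {g : Fin a → Fin (b + 1) // Function.Surjective g} +
        Nat.card {g : Fin a → Fin b // Function.Surjective g} := by
  rw [← Nat.card_sum]
  symm
  refine Nat.card_eq_of_bijective (Sum.elim
    (fun g => ⟨p.insertNth x g.1, fun y => ?_, by simp⟩)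
    (fun g => ⟨p.insertNth x (x.succAbove ∘ g.1), fun y => ?_, by simp⟩)) ⟨?_, ?_⟩
  · obtain ⟨i, hi⟩ := g.2 y
    exact ⟨p.succAbove i, by simp [hi]⟩
  · by_cases hy : y = x
    · exact ⟨p, by simp [hy]⟩
    · obtain ⟨z, rfl⟩ := Fin.exists_succAbove_eq hy
      obtain ⟨i, rfl⟩ := g.2 z
      exact ⟨p.succAbove i, by simp⟩
  · have hne : ∀ (g : {g : Fin a → Fin (b + 1) // Function.Surjective g}) (g' : Fin a → Fin b),
        g.1 ≠ x.succAbove ∘ g' := by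
      rintro ⟨g, hg⟩ g' rfl
      obtain ⟨i, hi⟩ := hg x
      exact Fin.succAbove_ne _ _ hi
    have hinj : ∀ g g' : Fin a → Fin (b + 1),
        (p.insertNth x g : Fin (a + 1) → Fin (b + 1)) = p.insertNth x g' → g = g' :=
      fun g g' h => (Fin.insertNth_inj.1 h).2
    rintro (g | g) (g' | g') h <;> replace h := hinj _ _ (congrArg Subtype.val h)
    · rw [Subtype.ext h]
    · exact absurd h (hne _ _)
    · exact absurd h.symm (hne _ _)
    · rw [Subtype.ext (Fin.succAbove_right_injective.comp_left h)]
  · rintro ⟨f, hf, hp⟩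
    have hfi : p.insertNth x (fun i => f (p.succAbove i)) = f := by
      rw [← hp]; exact Fin.insertNth_self_removeNth p f
    by_cases hx : ∃ i, f (p.succAbove i) = x
    · refine ⟨Sum.inl ⟨fun i => f (p.succAbove i), fun y => ?_⟩, Subtype.ext hfi⟩
      obtain ⟨q, rfl⟩ := hf y
      by_cases hq : q = p
      · obtain ⟨i, hi⟩ := hx
        exact ⟨i, by rw [hq, hp]; exact hi⟩
      · obtain ⟨i, rfl⟩ := Fin.exists_succAbove_eq hq
        exact ⟨i, rfl⟩
    · push Not at hx
      choose g hg using fun i => Fin.exists_succAbove_eq (hx i)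
      refine ⟨Sum.inr ⟨g, fun z => ?_⟩, Subtype.ext ?_⟩
      · obtain ⟨q, hq⟩ := hf (x.succAbove z)
        have hqp : q ≠ p := by
          rintro rfl
          exact Fin.succAbove_ne x z (hq.symm.trans hp)
        obtain ⟨i, rfl⟩ := Fin.exists_succAbove_eq hqp
        exact ⟨i, Fin.succAbove_right_injective ((hg i).trans hq)⟩
      · have hgf : x.succAbove ∘ g = fun i => f (p.succAbove i) := funext hg
        change (p.insertNth x (x.succAbove ∘ g) : Fin (a + 1) → Fin (b + 1)) = f
        rw [hgf, hfi]

theorem card_surjective (a b : ℕ) :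
    Nat.card {g : Fin a → Fin b // Function.Surjective g} = b.factorial * stirling a b := by
  induction a generalizing b with
  | zero =>
    cases b with
    | zero =>
      have : Unique {g : Fin 0 → Fin 0 // Function.Surjective g} :=
        ⟨⟨⟨id, fun x => x.elim0⟩⟩, fun g => Subtype.ext (Subsingleton.elim _ _)⟩
      simp [stirling]
    | succ b =>
      have : IsEmpty {g : Fin 0 → Fin (b + 1) // Function.Surjective g} :=
        ⟨fun g => (g.2 0).elim fun i _ => i.elim0⟩
      simp [stirling]
  | succ a ih =>
    cases b with
    | zero =>
      have : IsEmpty {g : Fin (a + 1) → Fin 0 // Function.Surjective g} :=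
        ⟨fun g => (g.1 0).elim0⟩
      simp [stirling]
    | succ b =>
      have e : {g : Fin (a + 1) → Fin (b + 1) // Function.Surjective g} ≃
          Σ x : Fin (b + 1), PinnedSurj a b 0 x :=
        { toFun := fun g => ⟨g.1 0, g.1, g.2, rfl⟩
          invFun := fun g => ⟨g.2.1, g.2.2.1⟩
          left_inv := fun _ => rfl
          right_inv := by rintro ⟨_, g, hg, rfl⟩; rfl }
      rw [Nat.card_congr e, Nat.card_sigma]
      simp only [card_pinnedSurj, ih, Finset.sum_const, Finset.card_univ, Fintype.card_fin,
        stirling, Nat.factorial_succ, smul_eq_mul]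
      ring

/-- The pinned count does not depend on the pinning, and equals `b! · S(a+1, b+1)` because
removing `p` is what the Stirling recurrence expresses. -/
theorem card_pinnedSurj_eq (a b : ℕ) (p : Fin (a + 1)) (x : Fin (b + 1)) :
    Nat.card (PinnedSurj a b p x) = b.factorial * stirling (a + 1) (b + 1) := by
  rw [card_pinnedSurj, card_surjective, card_surjective, stirling, Nat.factorial_succ]
  ring

/-! ### The count -/

/-- The number of max-ascending permutations for parameters n and k equals the
poly-Bernoulli number B(n,k). -/
theorem card_maxAscending_eq_polyBernoulli (n k : ℕ) :
    Nat.card {f : Equiv.Perm (Fin (n + k + 2)) // IsMaxAscending n k f} = polyBernoulli n k := by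
  rw [card_maxAscending_eq_card_isKey, card_isKey, Nat.card_sigma, polyBernoulli,
    ← Fin.sum_univ_eq_sum_range (fun m =>
      (Nat.factorial m) ^ 2 * stirling (n + 1) (m + 1) * stirling (k + 1) (m + 1))]
  refine Finset.sum_congr rfl fun m _ => ?_
  rw [Nat.card_prod, card_pinnedSurj_eq, card_pinnedSurj_eq]
  ring
end

section
/- The number of acyclic orientations of the complete bipartite graph K_{n,k} equals the poly-Bernoulli number B(n,k) = ∑_{m=0}^{min(n,k)} (m!)² · S(n+1,m+1) · S(k+1,m+1); equivalently, the number of functions f : Fin n → Fin k → Bool such that there do not exist rows i ≠ i' and columns j ≠ j' with f i j = true, f i' j = false, f i' j' = true and f i j' = false equals B(n,k). -/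
/-- Counts the functions from an `n`-element set whose values, together with `z`, form exactly `S`.
The preimage of `z`, enlarged by one extra element, is nonempty, whence the `n + 1`. -/
theorem card_insert_image_eq {β : Type*} [Fintype β] [DecidableEq β] (z : β) (n : ℕ) :
    ∀ S : Finset β, z ∈ S →
      (Finset.univ.filter fun u : Fin n → β => insert z (Finset.univ.image u) = S).card =
        (S.card - 1).factorial * stirling (n + 1) S.card := by
  induction n with
  | zero =>
    intro S hz
    by_cases h : S = {z}
    · subst h
      simp [stirling]
    · have h1 : 1 < S.card := by
        by_contra hc
        have : S.card = 1 := by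
          have := Finset.card_pos.2 ⟨z, hz⟩
          omega
        obtain ⟨a, rfl⟩ := Finset.card_eq_one.1 this
        simp_all
      obtain ⟨b, hb⟩ : ∃ b, S.card = b + 2 := ⟨S.card - 2, by omega⟩
      have h' : ({z} : Finset β) ≠ S := fun e => h e.symm
      simp [hb, stirling, h']
  | succ n ih =>
    intro S hz
    let c : Finset β → ℕ := fun T =>
      (Finset.univ.filter fun u : Fin n → β => insert z (Finset.univ.image u) = T).card
    have key : (Finset.univ.filter fun u : Fin (n + 1) → β =>
          insert z (Finset.univ.image u) = S).card =
        ∑ x : β, (Finset.univ.filter fun u : Fin n → β =>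
          insert x (insert z (Finset.univ.image u)) = S).card := by
      simp only [← Fintype.card_subtype]
      rw [← Fintype.card_sigma]
      refine Fintype.card_congr ?_
      refine ((Fin.consEquiv fun _ => β).symm.subtypeEquiv
        (q := fun p : β × (Fin n → β) => insert p.1 (insert z (Finset.univ.image p.2)) = S)
        ?_).trans ?_
      · intro u
        have : insert z (Finset.univ.image u) =
            insert (u 0) (insert z (Finset.univ.image (Fin.tail u))) := by
          ext b
          simp [Fin.exists_fin_succ, Fin.tail]
          tauto
        rw [this]
        rfl
      · exact
          { toFun := fun p => ⟨p.1.1, p.1.2, p.2⟩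
            invFun := fun q => ⟨(q.1, q.2.1), q.2.2⟩
            left_inv := fun _ => rfl
            right_inv := fun _ => rfl }
    have term : ∀ x : β, (Finset.univ.filter fun u : Fin n → β =>
          insert x (insert z (Finset.univ.image u)) = S).card =
        if x ∈ S then (c S + if x = z then 0 else c (S.erase x)) else 0 := by
      intro x
      by_cases hx : x ∈ S
      · by_cases hxz : x = z
        · subst hxz
          simp [c, hx]
        · simp only [hx, hxz, if_true, if_false, c]
          rw [← Finset.card_union_of_disjoint, ← Finset.filter_or]
          · congr 1
            ext u
            simp only [Finset.mem_filter, Finset.mem_univ, true_and]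
            generalize insert z (Finset.univ.image u) = T
            constructor
            · rintro rfl
              by_cases hT : x ∈ T
              · simp [hT]
              · simp [hT]
            · rintro (rfl | rfl)
              · simp [hx]
              · simp [hx]
          · rw [Finset.disjoint_left]
            intro u h1 h2
            simp only [Finset.mem_filter, Finset.mem_univ, true_and] at h1 h2
            rw [h1] at h2
            rw [h2] at hx
            simp at hx
      · simp only [hx, if_false, Finset.card_eq_zero]
        ext u
        simp only [Finset.mem_filter, Finset.mem_univ, true_and, Finset.notMem_empty, iff_false]
        rintro rfl
        simp at hx
    obtain ⟨b, hb⟩ : ∃ b, S.card = b + 1 :=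
      ⟨S.card - 1, by have := Finset.card_pos.2 ⟨z, hz⟩; omega⟩
    have hc : ∀ x ∈ S.erase z, (if x = z then 0 else c (S.erase x)) =
        (b - 1).factorial * stirling (n + 1) b := by
      intro x hx
      obtain ⟨hxz, hxS⟩ := Finset.mem_erase.1 hx
      rw [if_neg hxz]
      have := ih (S.erase x) (Finset.mem_erase.2 ⟨fun e => hxz e.symm, hz⟩)
      rw [Finset.card_erase_of_mem hxS, hb] at this
      exact this
    rw [key, Finset.sum_congr rfl fun x _ => term x, ← Finset.sum_filter, Finset.filter_mem_eq_inter,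
      Finset.univ_inter, Finset.sum_add_distrib,
      ← Finset.add_sum_erase S (fun x => if x = z then 0 else c (S.erase x)) hz,
      Finset.sum_congr rfl hc]
    have hS : c S = b.factorial * stirling (n + 1) (b + 1) := by
      have := ih S hz
      rw [hb] at this
      exact this
    simp only [Finset.sum_const, hS, Finset.card_erase_of_mem hz, hb, if_true, smul_eq_mul,
      Nat.add_sub_cancel, zero_add]
    rw [show stirling (n + 1 + 1) (b + 1) =
      (b + 1) * stirling (n + 1) (b + 1) + stirling (n + 1) b from rfl]
    rcases b with _ | b
    · simp [stirling]
    · simp only [Nat.add_sub_cancel, Nat.factorial_succ]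
      ring

/-- Row levels of a tight presentation are dominated by those of any other presentation. The
induction on the level works since a column of level `s` separates rows of level `s + 1` from rows
of level `s`. -/
theorem row_level_le {n k m : ℕ} {u u' : Fin n → ℕ} {v v' : Fin k → ℕ}
    (hu : ∀ i, u i ≤ m)
    (Hu : ∀ s, 1 ≤ s → s ≤ m → ∃ i, u i = s) (Hv : ∀ s, s < m → ∃ j, v j = s)
    (h : ∀ i j, v j < u i ↔ v' j < u' i) (s : ℕ) : ∀ i, u i = s → s ≤ u' i := by
  induction s with
  | zero => intro i _; exact Nat.zero_le _
  | succ s ih =>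
    intro i hi
    have := hu i
    obtain ⟨j, hj⟩ := Hv s (by omega)
    have h1 : v' j < u' i := (h i j).1 (by omega)
    rcases Nat.eq_zero_or_pos s with rfl | hs
    · omega
    · obtain ⟨i', hi'⟩ := Hu s hs (by omega)
      have h2 := ih i' hi'
      have h3 := h i' j
      omega

/-- Column levels of a tight presentation are dominated by those of any other presentation. -/
theorem col_level_le {n k m : ℕ} {u u' : Fin n → ℕ} {v v' : Fin k → ℕ}
    (hu : ∀ i, u i ≤ m) (hv : ∀ j, v j ≤ m)
    (Hu : ∀ s, 1 ≤ s → s ≤ m → ∃ i, u i = s) (Hv : ∀ s, s < m → ∃ j, v j = s)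
    (h : ∀ i j, v j < u i ↔ v' j < u' i) (j : Fin k) : v j ≤ v' j := by
  rcases Nat.eq_zero_or_pos (v j) with h0 | hs
  · omega
  · obtain ⟨i, hi⟩ := Hu (v j) hs (hv j)
    have h1 := row_level_le hu Hu Hv h _ i hi
    have h2 := h i j
    omega

/-- Every matrix with nested row supports has a tight presentation. -/
theorem exists_tight {n k : ℕ} (f : Fin n → Fin k → Bool)
    (hf : ¬ ∃ (i i' : Fin n) (j j' : Fin k), i ≠ i' ∧ j ≠ j' ∧
          f i j = true ∧ f i' j = false ∧ f i' j' = true ∧ f i j' = false) :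
    ∃ (m : ℕ) (u : Fin n → ℕ) (v : Fin k → ℕ), (∀ i, u i ≤ m) ∧ (∀ j, v j ≤ m) ∧
      (∀ s, 1 ≤ s → s ≤ m → ∃ i, u i = s) ∧ (∀ s, s < m → ∃ j, v j = s) ∧
      ∀ i j, v j < u i ↔ f i j = true := by
  classical
  have ex : ∃ (m : ℕ) (u : Fin n → ℕ) (v : Fin k → ℕ), (∀ i, u i ≤ m) ∧ (∀ j, v j ≤ m) ∧
      ∀ i j, v j < u i ↔ f i j = true := by
    -- The level of a row is its number of `true` entries; the level of a column is the largest
    -- level of a row with entry `false` in that column.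
    let R : Fin n → Finset (Fin k) := fun i => Finset.univ.filter fun j => f i j = true
    have hR : ∀ i, (R i).card ≤ k := fun i => by simpa using Finset.card_le_univ (R i)
    refine ⟨k, fun i => (R i).card,
      fun j => (Finset.univ.filter fun i => f i j = false).sup fun i => (R i).card,
      hR, fun j => Finset.sup_le fun i _ => hR i, fun i j => ?_⟩
    constructor
    · intro h
      by_contra hc
      have hc' : f i j = false := by simpa using hc
      have : (R i).card ≤ (Finset.univ.filter fun i => f i j = false).sup fun i => (R i).card :=
        Finset.le_sup (f := fun i => (R i).card) (by simp [hc'])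
      exact absurd h (not_lt.2 this)
    · intro h
      have hpos : 0 < (R i).card := Finset.card_pos.2 ⟨j, by simp [R, h]⟩
      refine (Finset.sup_lt_iff hpos).2 fun i' hi' => ?_
      have hi' : f i' j = false := by simpa using hi'
      refine Finset.card_lt_card (Finset.ssubset_iff_of_subset ?_ |>.2 ⟨j, by simp [R, h], by
        simp [R, hi']⟩)
      intro j' hj'
      have hj' : f i' j' = true := by simpa [R] using hj'
      by_contra hc
      have hc' : f i j' = false := by simpa [R] using hc
      refine hf ⟨i, i', j, j', ?_, ?_, h, hi', hj', hc'⟩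
      · rintro rfl; simp_all
      · rintro rfl; simp_all
  obtain ⟨u, v, hu, hv, h⟩ := Nat.find_spec ex
  have hmin := fun m' => Nat.find_min ex (m := m')
  set m := Nat.find ex
  refine ⟨m, u, v, hu, hv, ?_, ?_, h⟩
  · intro s h1 hs
    by_contra hc
    push Not at hc
    -- No row has level `s`, so column levels `s - 1` and `s` can be merged.
    refine hmin (m - 1) (by omega) ⟨fun i => if u i < s then u i else u i - 1,
      fun j => if v j < s then v j else v j - 1, fun i => ?_, fun j => ?_, fun i j => ?_⟩
    · have := hu i; have := hc i; dsimp only; split_ifs <;> omega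
    · have := hv j; dsimp only; split_ifs <;> omega
    · rw [← h i j]; have := hc i; dsimp only; split_ifs <;> omega
  · intro s hs
    by_contra hc
    push Not at hc
    -- No column has level `s`, so row levels `s` and `s + 1` can be merged.
    refine hmin (m - 1) (by omega) ⟨fun i => if u i ≤ s then u i else u i - 1,
      fun j => if v j < s then v j else v j - 1, fun i => ?_, fun j => ?_, fun i j => ?_⟩
    · have := hu i; dsimp only; split_ifs <;> omega
    · have := hv j; have := hc j; dsimp only; split_ifs <;> omega
    · rw [← h i j]; have := hc j; dsimp only; split_ifs <;> omega

/-- Functions `Fin n → Fin (m + 1)` attaining every value except possibly `z`. -/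
abbrev AlmostSurj (n m : ℕ) (z : Fin (m + 1)) : Type :=
  {u : Fin n → Fin (m + 1) // insert z (Finset.univ.image u) = Finset.univ}

theorem card_almostSurj (n m : ℕ) (z : Fin (m + 1)) :
    Fintype.card (AlmostSurj n m z) = m.factorial * stirling (n + 1) (m + 1) := by
  rw [Fintype.card_subtype, card_insert_image_eq z n _ (Finset.mem_univ z)]
  simp

theorem AlmostSurj.exists_eq {n m : ℕ} {z : Fin (m + 1)} (u : AlmostSurj n m z) (s : ℕ)
    (hs : s ≤ m) (hz : s ≠ z) : ∃ i, (u.1 i : ℕ) = s := by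
  have : (⟨s, by omega⟩ : Fin (m + 1)) ∈ insert z (Finset.univ.image u.1) := by
    rw [u.2]; exact Finset.mem_univ _
  rw [Finset.mem_insert] at this
  rcases this with h | h
  · exact absurd (congrArg Fin.val h) hz
  · obtain ⟨i, _, hi⟩ := Finset.mem_image.1 h
    exact ⟨i, by rw [hi]⟩

theorem AlmostSurj.le {n m : ℕ} {z : Fin (m + 1)} (u : AlmostSurj n m z) : m ≤ n := by
  have h1 := congrArg Finset.card u.2
  have h2 := Finset.card_insert_le z (Finset.univ.image u.1)
  have h3 := Finset.card_image_le (s := Finset.univ) (f := u.1)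
  simp only [Finset.card_univ, Fintype.card_fin] at h1 h3
  omega

/-- Tight triples `(m, u, v)`: row levels attain every nonzero value, column levels every value
other than `m`. -/
abbrev Tight (n k : ℕ) : Type :=
  Σ m : Fin (min n k + 1), AlmostSurj n m 0 × AlmostSurj k m (Fin.last m)

/-- The threshold matrix of a tight triple. -/
def Tight.matrix {n k : ℕ} (t : Tight n k) : Fin n → Fin k → Bool :=
  fun i j => decide ((t.2.2.1 j : ℕ) < t.2.1.1 i)

theorem Tight.matrix_spec {n k : ℕ} (t : Tight n k) :
    ¬ ∃ (i i' : Fin n) (j j' : Fin k), i ≠ i' ∧ j ≠ j' ∧ t.matrix i j = true ∧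
      t.matrix i' j = false ∧ t.matrix i' j' = true ∧ t.matrix i j' = false := by
  rintro ⟨i, i', j, j', -, -, h1, h2, h3, h4⟩
  simp only [Tight.matrix, decide_eq_true_eq, decide_eq_false_iff_not] at h1 h2 h3 h4
  omega

theorem Tight.matrix_injective {n k : ℕ} : Function.Injective (Tight.matrix (n := n) (k := k)) := by
  rintro ⟨m, u, v⟩ ⟨m', u', v'⟩ h
  have h : ∀ i j, (v.1 j : ℕ) < u.1 i ↔ (v'.1 j : ℕ) < u'.1 i := fun i j => by
    simpa [Tight.matrix] using congrFun (congrFun h i) j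
  have hu : ∀ i, (u.1 i : ℕ) ≤ m := fun i => by omega
  have hu' : ∀ i, (u'.1 i : ℕ) ≤ m' := fun i => by omega
  have hv : ∀ j, (v.1 j : ℕ) ≤ m := fun j => by omega
  have hv' : ∀ j, (v'.1 j : ℕ) ≤ m' := fun j => by omega
  have Hu : ∀ s, 1 ≤ s → s ≤ (m : ℕ) → ∃ i, (u.1 i : ℕ) = s := fun s h1 h2 =>
    u.exists_eq s h2 (by simp; omega)
  have Hu' : ∀ s, 1 ≤ s → s ≤ (m' : ℕ) → ∃ i, (u'.1 i : ℕ) = s := fun s h1 h2 =>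
    u'.exists_eq s h2 (by simp; omega)
  have Hv : ∀ s, s < (m : ℕ) → ∃ j, (v.1 j : ℕ) = s := fun s h1 =>
    v.exists_eq s h1.le (by simp; omega)
  have Hv' : ∀ s, s < (m' : ℕ) → ∃ j, (v'.1 j : ℕ) = s := fun s h1 =>
    v'.exists_eq s h1.le (by simp; omega)
  have h' := fun i j => (h i j).symm
  have eu : ∀ i, (u.1 i : ℕ) = u'.1 i := fun i => le_antisymm
    (row_level_le (u := fun i => (u.1 i : ℕ)) (u' := fun i => (u'.1 i : ℕ))
      (v := fun j => (v.1 j : ℕ)) (v' := fun j => (v'.1 j : ℕ)) hu Hu Hv h _ i rfl)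
    (row_level_le (u := fun i => (u'.1 i : ℕ)) (u' := fun i => (u.1 i : ℕ))
      (v := fun j => (v'.1 j : ℕ)) (v' := fun j => (v.1 j : ℕ)) hu' Hu' Hv' h' _ i rfl)
  have ev : ∀ j, (v.1 j : ℕ) = v'.1 j := fun j => le_antisymm
    (col_level_le (u := fun i => (u.1 i : ℕ)) (u' := fun i => (u'.1 i : ℕ))
      (v := fun j => (v.1 j : ℕ)) (v' := fun j => (v'.1 j : ℕ)) hu hv Hu Hv h j)
    (col_level_le (u := fun i => (u'.1 i : ℕ)) (u' := fun i => (u.1 i : ℕ))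
      (v := fun j => (v'.1 j : ℕ)) (v' := fun j => (v.1 j : ℕ)) hu' hv' Hu' Hv' h' j)
  have em : m = m' := by
    apply Fin.ext
    apply le_antisymm
    · by_contra hc
      obtain ⟨i, hi⟩ := Hu m (by omega) le_rfl
      have := eu i; have := hu' i
      omega
    · by_contra hc
      obtain ⟨i, hi⟩ := Hu' m' (by omega) le_rfl
      have := eu i; have := hu i
      omega
  subst em
  have e1 : u = u' := Subtype.ext (funext fun i => Fin.ext (eu i))
  have e2 : v = v' := Subtype.ext (funext fun j => Fin.ext (ev j))
  rw [e1, e2]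

theorem Tight.exists_matrix_eq {n k : ℕ} (f : Fin n → Fin k → Bool)
    (hf : ¬ ∃ (i i' : Fin n) (j j' : Fin k), i ≠ i' ∧ j ≠ j' ∧
          f i j = true ∧ f i' j = false ∧ f i' j' = true ∧ f i j' = false) :
    ∃ t : Tight n k, t.matrix = f := by
  obtain ⟨m, u, v, hu, hv, Hu, Hv, h⟩ := exists_tight f hf
  let U : AlmostSurj n m 0 := ⟨fun i => ⟨u i, Nat.lt_succ_of_le (hu i)⟩, by
    ext s
    simp only [Finset.mem_insert, Finset.mem_image, Finset.mem_univ, true_and, iff_true]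
    by_cases hs : s = 0
    · exact Or.inl hs
    · obtain ⟨i, hi⟩ := Hu s (Nat.pos_of_ne_zero fun e => hs (Fin.ext e)) (by omega)
      exact Or.inr ⟨i, Fin.ext hi⟩⟩
  let V : AlmostSurj k m (Fin.last m) := ⟨fun j => ⟨v j, Nat.lt_succ_of_le (hv j)⟩, by
    ext s
    simp only [Finset.mem_insert, Finset.mem_image, Finset.mem_univ, true_and, iff_true]
    by_cases hs : s = Fin.last m
    · exact Or.inl hs
    · obtain ⟨j, hj⟩ := Hv s (Fin.val_lt_last hs)
      exact Or.inr ⟨j, Fin.ext hj⟩⟩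
  refine ⟨⟨⟨m, Nat.lt_succ_of_le (le_min U.le V.le)⟩, U, V⟩, ?_⟩
  funext i j
  rw [Bool.eq_iff_iff, ← h i j]
  simp [Tight.matrix, U, V]

/-- The number of acyclic orientations of the complete bipartite graph K_{n,k}, i.e. of
functions f : Fin n → Fin k → Bool with no directed 4-cycle, equals the poly-Bernoulli
number B(n,k). -/
theorem card_acyclic_orientations_eq_polyBernoulli (n k : ℕ) :
    Nat.card {f : Fin n → Fin k → Bool //
        ¬ ∃ (i i' : Fin n) (j j' : Fin k), i ≠ i' ∧ j ≠ j' ∧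
          f i j = true ∧ f i' j = false ∧ f i' j' = true ∧ f i j' = false} =
      polyBernoulli n k := by
  rw [← Nat.card_congr (Equiv.ofBijective
    (fun t : Tight n k => (⟨t.matrix, t.matrix_spec⟩ : {f : Fin n → Fin k → Bool //
        ¬ ∃ (i i' : Fin n) (j j' : Fin k), i ≠ i' ∧ j ≠ j' ∧
          f i j = true ∧ f i' j = false ∧ f i' j' = true ∧ f i j' = false}))
    ⟨fun t t' e => Tight.matrix_injective (congrArg Subtype.val e), fun f => by
      obtain ⟨t, ht⟩ := Tight.exists_matrix_eq f.1 f.2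
      exact ⟨t, Subtype.ext ht⟩⟩)]
  rw [Nat.card_eq_fintype_card, Fintype.card_sigma, polyBernoulli, Finset.sum_range]
  refine Finset.sum_congr rfl fun m _ => ?_
  rw [Fintype.card_prod, card_almostSurj, card_almostSurj]
  ring
end

section
/- An orientation of the complete bipartite graph K_{n,k} is acyclic if and only if it contains no directed 4-cycle; that is, for f : Fin n → Fin k → Bool, the relation r on Fin n ⊕ Fin k given by r (inl i) (inr j) ↔ f i j = true and r (inr j) (inl i) ↔ f i j = false (and no relations within the same side) has irreflexive transitive closure if and only if there do not exist rows i ≠ i' and columns j ≠ j' with f i j = true, f i' j = false, f i' j' = true and f i j' = false. -/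
/-!
Write `S i` for the set of out-neighbours of the left vertex `i`. The absence of a directed
4-cycle says exactly that the sets `S i` form a chain under inclusion. If `j ∈ S i` and
`j ∉ S i'`, then `S i'` is a proper subset of `S i`, so cardinalities strictly decrease along
every path `i → j → i'`. Giving right vertices intermediate values turns this into a
potential on all vertices that strictly decreases along every arc, which rules out directed
cycles. Conversely, a directed 4-cycle is a nonempty path from a vertex to itself.
-/

/-- The arc relation of the orientation of K_{n,k} encoded by `f`: there is an arc from
left vertex i to right vertex j when `f i j = true`, an arc from right vertex j to left
vertex i when `f i j = false`, and no other arcs. -/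
def arc {n k : ℕ} (f : Fin n → Fin k → Bool) : (Fin n ⊕ Fin k) → (Fin n ⊕ Fin k) → Prop
  | Sum.inl i, Sum.inr j => f i j = true
  | Sum.inr j, Sum.inl i => f i j = false
  | _, _ => False

/-- The out-neighbourhood of the left vertex `i`. -/
def outSet {n k : ℕ} (f : Fin n → Fin k → Bool) (i : Fin n) : Finset (Fin k) :=
  Finset.univ.filter fun j => f i j = true

/-- A potential on the vertices: twice the out-degree on the left, and on the right the least
value exceeding the potentials of all out-neighbours (`0` when there are none). Doubling
leaves room for the right vertices between consecutive left values. -/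
def potential {n k : ℕ} (f : Fin n → Fin k → Bool) : Fin n ⊕ Fin k → ℕ
  | Sum.inl i => 2 * (outSet f i).card
  | Sum.inr j => (Finset.univ.filter fun i => f i j = false).sup
      fun i => 2 * (outSet f i).card + 1

/-- Without directed 4-cycles, a right vertex separating two left vertices forces their
out-degrees to be strictly ordered, since the out-neighbourhoods are nested. -/
lemma card_outSet_lt {n k : ℕ} {f : Fin n → Fin k → Bool}
    (h : ¬ ∃ (i i' : Fin n) (j j' : Fin k), i ≠ i' ∧ j ≠ j' ∧
        f i j = true ∧ f i' j = false ∧ f i' j' = true ∧ f i j' = false)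
    {i i' : Fin n} {j : Fin k} (hij : f i j = true) (hij' : f i' j = false) :
    (outSet f i').card < (outSet f i).card := by
  apply Finset.card_lt_card
  rw [Finset.ssubset_iff_of_subset]
  · exact ⟨j, by simp [outSet, hij], by simp [outSet, hij']⟩
  · intro j' hj'
    simp only [outSet, Finset.mem_filter, Finset.mem_univ, true_and] at hj' ⊢
    by_contra hc
    rw [Bool.not_eq_true] at hc
    refine h ⟨i, i', j, j', ?_, ?_, hij, hij', hj', hc⟩
    · rintro rfl
      simp [hij] at hij'
    · rintro rfl
      simp [hij] at hc

lemma potential_lt_of_arc {n k : ℕ} {f : Fin n → Fin k → Bool}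
    (h : ¬ ∃ (i i' : Fin n) (j j' : Fin k), i ≠ i' ∧ j ≠ j' ∧
        f i j = true ∧ f i' j = false ∧ f i' j' = true ∧ f i j' = false)
    {a b : Fin n ⊕ Fin k} (hab : arc f a b) : potential f b < potential f a := by
  rcases a with i | j <;> rcases b with i' | j'
  · exact hab.elim
  · have hf : f i j' = true := hab
    have hpos : 0 < (outSet f i).card :=
      Finset.card_pos.mpr ⟨j', by simp [outSet, hf]⟩
    -- Positivity covers the case where the supremum is empty.
    refine (Finset.sup_lt_iff (show (⊥ : ℕ) < 2 * (outSet f i).card from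
      Nat.mul_pos two_pos hpos)).mpr fun i' hi' => ?_
    have := card_outSet_lt h hf (Finset.mem_filter.mp hi').2
    omega
  · have hf : f i' j = false := hab
    exact Nat.lt_of_succ_le (Finset.le_sup (f := fun i => 2 * (outSet f i).card + 1)
      (Finset.mem_filter.mpr ⟨Finset.mem_univ i', hf⟩))
  · exact hab.elim

/-- An orientation of the complete bipartite graph K_{n,k} is acyclic (the transitive
closure of its arc relation is irreflexive) iff it contains no directed 4-cycle. -/
theorem acyclic_iff_no_directed_four_cycle (n k : ℕ) (f : Fin n → Fin k → Bool) :
    Irreflexive (Relation.TransGen (arc f)) ↔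
      ¬ ∃ (i i' : Fin n) (j j' : Fin k), i ≠ i' ∧ j ≠ j' ∧
        f i j = true ∧ f i' j = false ∧ f i' j' = true ∧ f i j' = false := by
  constructor
  · rintro h ⟨i, i', j, j', -, -, h1, h2, h3, h4⟩
    have a1 : arc f (Sum.inl i) (Sum.inr j) := h1
    have a2 : arc f (Sum.inr j) (Sum.inl i') := h2
    have a3 : arc f (Sum.inl i') (Sum.inr j') := h3
    have a4 : arc f (Sum.inr j') (Sum.inl i) := h4
    exact h (Sum.inl i) ((((Relation.TransGen.single a1).tail a2).tail a3).tail a4)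
  · intro h a ha
    have key : ∀ b, Relation.TransGen (arc f) a b → potential f b < potential f a := by
      intro b hb
      induction hb with
      | single hab => exact potential_lt_of_arc h hab
      | tail _ hbc ih => exact (potential_lt_of_arc h hbc).trans ih
    exact lt_irrefl _ (key a ha)
end

section
/- For all natural numbers n and k with k ≥ 1, the number G(n,k) of Γ-free 0-1 matrices of size n×k satisfies the recursion G(n,k) = G(n,k−1) + ∑_{j=1}^{n} C(n,j) · G(n−j+1, k−1), where C(n,j) is the binomial coefficient. -/
/-- `G n k` is the number of Γ-free 0-1 matrices of size n×k. -/
noncomputable def G (n k : ℕ) : ℕ := Nat.card {M : Fin n → Fin k → Bool // GammaFree M}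

/-- The rows that the first column, with set of ones `S`, does not force to vanish on the
remaining columns: the rows outside `S` together with the largest element of `S`, if any. -/
def freeRows {n : ℕ} (S : Finset (Fin n)) : Finset (Fin n) :=
  Finset.univ.filter fun i => ¬ (i ∈ S ∧ ∃ i' ∈ S, i < i')

lemma mem_freeRows {n : ℕ} {S : Finset (Fin n)} {i : Fin n} :
    i ∈ freeRows S ↔ ¬ (i ∈ S ∧ ∃ i' ∈ S, i < i') := by
  simp [freeRows]

lemma freeRows_empty {n : ℕ} : freeRows (∅ : Finset (Fin n)) = Finset.univ := by
  simp [freeRows]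

lemma card_freeRows {n : ℕ} {S : Finset (Fin n)} (hS : S.Nonempty) :
    (freeRows S).card = n - S.card + 1 := by
  have hc : (freeRows S)ᶜ = S.erase (S.max' hS) := by
    ext i
    rw [Finset.mem_compl, mem_freeRows, not_not, Finset.mem_erase]
    constructor
    · rintro ⟨hi, i', hi', hlt⟩
      exact ⟨(hlt.trans_le (S.le_max' i' hi')).ne, hi⟩
    · rintro ⟨hne, hi⟩
      exact ⟨hi, _, S.max'_mem hS, lt_of_le_of_ne (S.le_max' i hi) hne⟩
  have h1 := Finset.card_compl_add_card (freeRows S)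
  rw [hc, Finset.card_erase_of_mem (S.max'_mem hS), Fintype.card_fin] at h1
  have h2 := hS.card_pos
  have h3 := S.card_le_univ
  rw [Fintype.card_fin] at h3
  omega

/-- Deleting zero rows: the Γ-free matrices supported on the rows in `R` are counted by
`G R.card m`. -/
lemma card_gammaFree_supported {n m : ℕ} (R : Finset (Fin n)) :
    Nat.card {N : Fin n → Fin m → Bool // GammaFree N ∧ ∀ i ∉ R, ∀ j, N i j = false}
      = G R.card m := by
  let e := R.orderEmbOfFin rfl
  have hmem : ∀ a, e a ∈ R := R.orderEmbOfFin_mem rfl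
  have hex : ∀ i ∈ R, ∃ a, e a = i := fun i hi => by
    have h : i ∈ Set.range e := by rw [Finset.range_orderEmbOfFin]; exact hi
    exact h
  refine Nat.card_eq_of_bijective (fun N => ⟨fun a => N.1 (e a), ?_⟩) ⟨?_, ?_⟩
  · rintro ⟨a, a', j, j', ha, hj, h⟩
    exact N.2.1 ⟨e a, e a', j, j', e.lt_iff_lt.2 ha, hj, h⟩
  · rintro ⟨N, hN, hN0⟩ ⟨N', hN', hN0'⟩ h
    ext i j
    by_cases hi : i ∈ R
    · obtain ⟨a, rfl⟩ := hex i hi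
      exact congrFun (congrFun (congrArg Subtype.val h) a) j
    · simp [hN0 i hi j, hN0' i hi j]
  · rintro ⟨M, hM⟩
    let N : Fin n → Fin m → Bool := Function.extend e M fun _ _ => false
    have hNe : ∀ a, N (e a) = M a := fun a => e.injective.extend_apply _ _ a
    have hN0 : ∀ i ∉ R, ∀ j, N i j = false := fun i hi j => by
      have h : ¬ ∃ a, e a = i := by rintro ⟨a, rfl⟩; exact hi (hmem a)
      simp only [N, Function.extend_apply' _ _ _ h]
    have hR : ∀ i j, N i j = true → ∃ a, e a = i := fun i j h => by
      by_contra hi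
      have := hN0 i (fun hiR => hi (hex i hiR)) j
      simp [this] at h
    refine ⟨⟨N, ?_, hN0⟩, Subtype.ext (funext hNe)⟩
    rintro ⟨i, i', j, j', hi, hj, h1, h2, h3⟩
    obtain ⟨a, rfl⟩ := hR _ _ h1
    obtain ⟨a', rfl⟩ := hR _ _ h3
    rw [hNe] at h1 h2 h3
    exact hM ⟨a, a', j, j', e.lt_iff_lt.1 hi, hj, h1, h2, h3⟩

/-- The set of rows with a one in the first column. -/
def firstCol {n m : ℕ} (M : Fin n → Fin (m + 1) → Bool) : Finset (Fin n) :=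
  Finset.univ.filter fun i => M i 0 = true

lemma mem_firstCol {n m : ℕ} {M : Fin n → Fin (m + 1) → Bool} {i : Fin n} :
    i ∈ firstCol M ↔ M i 0 = true := by
  simp [firstCol]

lemma gammaFree_iff_tail {n m : ℕ} (M : Fin n → Fin (m + 1) → Bool) :
    GammaFree M ↔ GammaFree (fun i (j : Fin m) => M i j.succ) ∧
      ∀ i ∉ freeRows (firstCol M), ∀ j : Fin m, M i j.succ = false := by
  simp only [mem_freeRows, not_not, mem_firstCol]
  constructor
  · intro h
    refine ⟨?_, ?_⟩
    · rintro ⟨i, i', j, j', hi, hj, h'⟩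
      exact h ⟨i, i', j.succ, j'.succ, hi, Fin.succ_lt_succ_iff.2 hj, h'⟩
    · rintro i ⟨hi, i', hi', hlt⟩ j
      by_contra hj
      exact h ⟨i, i', 0, j.succ, hlt, j.succ_pos, hi, by simpa using hj, hi'⟩
  · rintro ⟨h, h0⟩ ⟨i, i', j, j', hi, hj, h1, h2, h3⟩
    obtain ⟨b, rfl⟩ := Fin.exists_succ_eq.2 (Fin.ne_zero_of_lt hj)
    cases j using Fin.cases with
    | zero => simp [h0 i ⟨h1, i', h3, hi⟩ b] at h2
    | succ a => exact h ⟨i, i', a, b, hi, Fin.succ_lt_succ_iff.1 hj, h1, h2, h3⟩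

lemma card_firstCol_fiber {n m : ℕ} (S : Finset (Fin n)) :
    Nat.card {M : {M : Fin n → Fin (m + 1) → Bool // GammaFree M} // firstCol M.1 = S}
      = G (freeRows S).card m := by
  rw [← card_gammaFree_supported]
  refine Nat.card_eq_of_bijective (fun M => ⟨fun i j => M.1.1 i j.succ, ?_⟩) ⟨?_, ?_⟩
  · have h := (gammaFree_iff_tail M.1.1).1 M.1.2
    rwa [M.2] at h
  · rintro ⟨⟨M, hM⟩, hS⟩ ⟨⟨M', hM'⟩, hS'⟩ h
    ext i j
    cases j using Fin.cases with
    | zero =>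
      rw [Bool.eq_iff_iff, ← mem_firstCol, ← mem_firstCol]
      exact (Finset.ext_iff.1 (hS.trans hS'.symm) i)
    | succ a =>
      exact congrFun (congrFun (congrArg Subtype.val h) i) a
  · rintro ⟨N, hN⟩
    let M : Fin n → Fin (m + 1) → Bool := fun i => Fin.cons (decide (i ∈ S)) (N i)
    have hS : firstCol M = S := by ext i; simp [mem_firstCol, M]
    have hT : (fun i (j : Fin m) => M i j.succ) = N := by ext i j; simp [M]
    have hM : GammaFree M := by
      rw [gammaFree_iff_tail, hS]
      exact hN
    exact ⟨⟨⟨M, hM⟩, hS⟩, Subtype.ext hT⟩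

/-- The recursion G(n,k) = G(n,k−1) + ∑_{j=1}^{n} C(n,j) · G(n−j+1, k−1) for k ≥ 1. -/
theorem gammaFree_recursion (n k : ℕ) (hk : 1 ≤ k) :
    G n k = G n (k - 1) + ∑ j ∈ Finset.Icc 1 n, n.choose j * G (n - j + 1) (k - 1) := by
  obtain ⟨m, rfl⟩ := Nat.exists_eq_add_of_le' hk
  rw [Nat.add_sub_cancel]
  -- The case split is needed because `n - 0 + 1 ≠ n`.
  let f : ℕ → ℕ := fun j => if j = 0 then G n m else G (n - j + 1) m
  have hf : ∀ S : Finset (Fin n), G (freeRows S).card m = f S.card := fun S => by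
    rcases S.eq_empty_or_nonempty with rfl | hS
    · simp [f, freeRows_empty]
    · simp only [f, if_neg hS.card_pos.ne', card_freeRows hS]
  calc G n (m + 1)
      = ∑ S : Finset (Fin n), f S.card := by
        rw [G, ← Nat.card_congr (Equiv.sigmaFiberEquiv fun M :
          {M : Fin n → Fin (m + 1) → Bool // GammaFree M} => firstCol M.1), Nat.card_sigma]
        exact Finset.sum_congr rfl fun S _ => (card_firstCol_fiber S).trans (hf S)
    _ = ∑ j ∈ Finset.range (n + 1), n.choose j * f j := by
        rw [← Finset.powerset_univ, Finset.sum_powerset_apply_card]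
        simp
    _ = G n m + ∑ j ∈ Finset.Icc 1 n, n.choose j * G (n - j + 1) m := by
        rw [Finset.range_eq_Ico, Finset.sum_eq_sum_Ico_succ_bot n.succ_pos]
        congr 1
        · simp [f]
        · refine Finset.sum_congr rfl fun j hj => ?_
          have : j ≠ 0 := by simp at hj; omega
          simp [f, this]
end

section
/- In a lonesum 0-1 matrix, larger row sums dominate: if M : Fin n → Fin k → Bool is lonesum and rows i, i' satisfy (row sum of i) ≥ (row sum of i'), then every column j with M i' j = true also satisfies M i j = true. In particular, two rows of a lonesum matrix with equal row sums are equal. -/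
theorem rowSum_eq_of_perm {n k : ℕ} {M N : Fin n → Fin k → Bool} {i : Fin n}
    (σ : Equiv.Perm (Fin k)) (h : ∀ j, N i j = M i (σ j)) : rowSum N i = rowSum M i :=
  Finset.card_equiv σ (by simp [h])

theorem colSum_eq_of_perm {n k : ℕ} {M N : Fin n → Fin k → Bool} {j : Fin k}
    (σ : Equiv.Perm (Fin n)) (h : ∀ i, N i j = M (σ i) j) : colSum N j = colSum M j :=
  Finset.card_equiv σ (by simp [h])

/-- A matrix containing a 2 × 2 permutation matrix as a submatrix is not lonesum. -/
theorem not_lonesum_of_interchange {n k : ℕ} {M : Fin n → Fin k → Bool} {i i' : Fin n}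
    {j l : Fin k} (h₁ : M i' j = true) (h₂ : M i j = false) (h₃ : M i l = true)
    (h₄ : M i' l = false) : ¬ Lonesum M := by
  intro h
  let N : Fin n → Fin k → Bool := fun r c =>
    if c = j ∨ c = l then M (Equiv.swap i i' r) c else M r c
  have hN : N = M := by
    refine h N (fun r => ?_) (fun c => ?_)
    · by_cases hr : r = i ∨ r = i'
      · refine rowSum_eq_of_perm (Equiv.swap j l) fun c => ?_
        simp only [N, Equiv.swap_apply_def]
        grind
      · refine rowSum_eq_of_perm (Equiv.refl _) fun c => ?_
        simp only [N, Equiv.swap_apply_def, Equiv.refl_apply]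
        grind
    · by_cases hc : c = j ∨ c = l
      · exact colSum_eq_of_perm (Equiv.swap i i') fun r => by simp [N, hc]
      · exact colSum_eq_of_perm (Equiv.refl _) fun r => by simp [N, hc]
  have hij : N i j = M i j := by rw [hN]
  simp [N, h₁, h₂] at hij

theorem row_le_of_rowSum_le {n k : ℕ} {M : Fin n → Fin k → Bool} (h : Lonesum M)
    {i i' : Fin n} (hle : rowSum M i' ≤ rowSum M i) (j : Fin k) (hj : M i' j = true) :
    M i j = true := by
  by_contra hij
  obtain ⟨l, hl, hl'⟩ : ∃ l, M i l = true ∧ M i' l = false := by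
    by_contra! hno
    -- Otherwise the support of row `i` lies in that of row `i'` and misses `j`.
    refine (Finset.card_lt_card ?_).not_ge hle
    refine (Finset.ssubset_iff_of_subset fun l => ?_).2 ⟨j, by simp [hj], by simp [hij]⟩
    simpa using hno l
  exact not_lonesum_of_interchange hj (by simpa using hij) hl hl' h

/-- In a lonesum matrix larger row sums dominate, and rows with equal row sums are equal. -/
theorem lonesum_row_domination (n k : ℕ) (M : Fin n → Fin k → Bool) (h : Lonesum M)
    (i i' : Fin n) (hge : rowSum M i' ≤ rowSum M i) :
    (∀ j, M i' j = true → M i j = true) ∧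
      (rowSum M i = rowSum M i' → ∀ j, M i j = M i' j) :=
  ⟨row_le_of_rowSum_le h hge, fun heq j => Bool.eq_iff_iff.2
    ⟨row_le_of_rowSum_le h heq.le j, row_le_of_rowSum_le h hge j⟩⟩
end
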